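/- Let $R_0$ be an arbitrary commutative Noetherian ring, $\mathfrak{f} \geq 4$, $\mathcal{R} = R_0[x_{i,j}; t_i]$, and $J = \operatorname{Pf}_4(\mathbf{X}) + I_1(\mathbf{t}\mathbf{X})$. If $R_0$ is a Gorenstein ring, then $\mathcal{R}/J$ is a Gorenstein ring. -/

import Mathlib

open CategoryTheory

noncomputable section
namespace AluffiStmt

universe u

/-- The index set for the entries of a generic `f × f` alternating matrix:
pairs `(i, j)` with `i < j`. -/
abbrev P2 (f : ℕ) := {p : Fin f × Fin f // p.1 < p.2}

/-- `l` is a (weakly) regular sequence on `R`: each entry is a nonzerodivisor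
modulo the ideal generated by the previous entries. -/
def IsRegSeq (R : Type*) [CommRing R] (l : List R) : Prop :=
  ∀ (i : ℕ) (h : i < l.length) (x : R),
    l.get ⟨i, h⟩ * x ∈ Ideal.span {y | y ∈ l.take i} →
      x ∈ Ideal.span {y | y ∈ l.take i}

/-- The grade of an ideal: the supremum of lengths of regular sequences on `R`
contained in `I`. -/
def grade {R : Type*} [CommRing R] (I : Ideal R) : ℕ :=
  sSup {n | ∃ l : List R, l.length = n ∧ (∀ r ∈ l, r ∈ I) ∧ IsRegSeq R l}

/-- Projective dimension at most `n`, expressed by vanishing of `Ext^i (M, -)`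
for all `i > n`. -/
def projDimLE (R : Type u) [CommRing R] (M : ModuleCat.{u} R) (n : ℕ) : Prop :=
  ∀ (N : ModuleCat.{u} R) (i : ℕ), n < i →
    Subsingleton (((Ext R (ModuleCat.{u} R) i).obj (Opposite.op M)).obj N)

/-- `M` has projective dimension exactly `n`. -/
def projDimEq (R : Type u) [CommRing R] (M : ModuleCat.{u} R) (n : ℕ) : Prop :=
  projDimLE R M n ∧ ∀ k : ℕ, projDimLE R M k → n ≤ k

/-- An ideal `I` is perfect if `grade I = pd_R (R/I)`. -/
def IsPerfectIdeal (R : Type u) [CommRing R] (I : Ideal R) : Prop :=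
  projDimEq R (ModuleCat.of R (R ⧸ I)) (grade I)
/-- Variables for the ring `𝓡 = R₀[x_{i,j}; t_i]`. -/
abbrev Var (f : ℕ) := P2 f ⊕ Fin f

/-- The `(i,j)` entry of the generic alternating matrix `X` in `𝓡`. -/
def xvt (R₀ : Type u) [CommRing R₀] (f : ℕ) (i j : Fin f) : MvPolynomial (Var f) R₀ :=
  if h : i < j then MvPolynomial.X (Sum.inl ⟨(i, j), h⟩)
  else if h : j < i then - MvPolynomial.X (Sum.inl ⟨(j, i), h⟩) else 0

/-- The entry `t_i` of the generic row vector `t` in `𝓡`. -/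
def tvt (R₀ : Type u) [CommRing R₀] (f : ℕ) (i : Fin f) : MvPolynomial (Var f) R₀ :=
  MvPolynomial.X (Sum.inr i)

/-- The Pfaffian of the `4 × 4` principal submatrix of `X` with rows/columns
`i < j < k < l`. -/
def pf4t (R₀ : Type u) [CommRing R₀] (f : ℕ) (i j k l : Fin f) : MvPolynomial (Var f) R₀ :=
  xvt R₀ f i j * xvt R₀ f k l - xvt R₀ f i k * xvt R₀ f j l + xvt R₀ f i l * xvt R₀ f j k

/-- The ideal `Pf₄(X)` of `𝓡`. -/
def Pf4t (R₀ : Type u) [CommRing R₀] (f : ℕ) : Ideal (MvPolynomial (Var f) R₀) :=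
  Ideal.span {p | ∃ i j k l : Fin f, i < j ∧ j < k ∧ k < l ∧ p = pf4t R₀ f i j k l}

/-- The `j`-th entry of the row vector `t·X`. -/
def tX (R₀ : Type u) [CommRing R₀] (f : ℕ) (j : Fin f) : MvPolynomial (Var f) R₀ :=
  ∑ i : Fin f, tvt R₀ f i * xvt R₀ f i j

/-- The ideal `I₁(t·X)` generated by the entries of `t·X`. -/
def ItX (R₀ : Type u) [CommRing R₀] (f : ℕ) : Ideal (MvPolynomial (Var f) R₀) :=
  Ideal.span {p | ∃ j : Fin f, p = tX R₀ f j}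

/-- The ideal `J = Pf₄(X) + I₁(t·X)`. -/
def Jt (R₀ : Type u) [CommRing R₀] (f : ℕ) : Ideal (MvPolynomial (Var f) R₀) :=
  Pf4t R₀ f + ItX R₀ f
/-- Self-injective dimension at most `n`: `Ext^i(-, R)` vanishes for `i > n`. -/
def selfInjDimLE (R : Type u) [CommRing R] (n : ℕ) : Prop :=
  ∀ (M : ModuleCat.{u} R) (i : ℕ), n < i →
    Subsingleton (((Ext R (ModuleCat.{u} R) i).obj (Opposite.op M)).obj (ModuleCat.of R R))

/-- A ring is Gorenstein if it is Noetherian and every localization at a prime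
has finite self-injective dimension. -/
def IsGorensteinRing (R : Type u) [CommRing R] : Prop :=
  IsNoetherianRing R ∧ ∀ (P : Ideal R) [P.IsPrime],
    ∃ n : ℕ, selfInjDimLE (Localization.AtPrime P) n

/-!
Over `ℤ` the ring `A = ℤ[x, t] ⧸ J` has a straightening law: its monomials supported on chains of a
poset structure on the variables form a basis. The sums `θ` of the variables of equal rank generate
a polynomial ring `ℤ[θ]` over which `A` is finite free. Moreover `A` is factorial: `x₀₁` is a prime
element, and inverting it turns `A` into a localized polynomial ring, so Nagata's criterion applies.

A factorial domain `A` which is finite free over a factorial domain `S` is a Frobenius `S`-algebra: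
its dual `Hom_S(A, S)` is a rank one reflexive module over a factorial domain, hence free (Murthy).
Frobenius algebras are stable under base change, so `R₀[x, t] ⧸ J` is a Frobenius algebra over
`R₀[θ]`, and being Gorenstein passes from `R₀` to the polynomial ring `R₀[θ]` and from there to any
Frobenius algebra.
-/

/-! ### Injective dimension -/

section InjectiveDimension

lemma subsingleton_ext_succ_iff {R : Type u} [CommRing R] (X Y : ModuleCat.{u} R) (i : ℕ) :
    Subsingleton (((Ext R (ModuleCat.{u} R) (i + 1)).obj (Opposite.op X)).obj Y) ↔
      Subsingleton (Abelian.Ext X Y (i + 1)) := by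
  let P := projectiveResolution X
  trans ∀ g : P.complex.X (i + 1) ⟶ Y, P.complex.d (i + 2) (i + 1) ≫ g = 0 →
    ∃ h : P.complex.X i ⟶ Y, P.complex.d (i + 1) i ≫ h = g
  · rw [← ModuleCat.isZero_iff_subsingleton, (P.isoExt (i + 1) Y).isZero_iff,
      ← HomologicalComplex.exactAt_iff_isZero_homology,
      HomologicalComplex.exactAt_iff' _ i (i + 1) (i + 2) (by simp) (by simp),
      ShortComplex.moduleCat_exact_iff]
    rfl
  · refine ⟨fun h => subsingleton_of_forall_eq 0 fun e => ?_, fun h g hg => ?_⟩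
    · obtain ⟨g, hg, rfl⟩ := P.extMk_surjective e (i + 2) rfl
      exact (P.extMk_eq_zero_iff g (i + 2) rfl hg i rfl).2 (h g hg)
    · exact (P.extMk_eq_zero_iff g (i + 2) rfl hg i rfl).1 (Subsingleton.elim _ _)

lemma selfInjDimLE_iff_hasInjectiveDimensionLE (R : Type u) [CommRing R] (n : ℕ) :
    selfInjDimLE R n ↔ HasInjectiveDimensionLE (ModuleCat.of R R) n := by
  refine ⟨fun h => .mk fun i hi X e => ?_, fun h X i hi => ?_⟩
  · obtain ⟨j, rfl⟩ := Nat.exists_eq_succ_of_ne_zero (Nat.ne_zero_of_lt hi)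
    have := (subsingleton_ext_succ_iff X (ModuleCat.of R R) j).1 (h X (j + 1) hi)
    exact Subsingleton.elim e 0
  · obtain ⟨j, rfl⟩ := Nat.exists_eq_succ_of_ne_zero (Nat.ne_zero_of_lt hi)
    exact (subsingleton_ext_succ_iff X _ j).2
      (HasInjectiveDimensionLT.subsingleton _ (n + 1) (j + 1) hi X)

lemma hasInjectiveDimensionLE_map {C D : Type*} [Category* C]
    [Category* D] [Abelian C] [Abelian D] [EnoughInjectives C] (F : C ⥤ D) [F.Additive]
    [F.PreservesInjectiveObjects] [Limits.PreservesFiniteLimits F]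
    [Limits.PreservesFiniteColimits F] {X : C} {n : ℕ} (hX : HasInjectiveDimensionLE X n) :
    HasInjectiveDimensionLE (F.obj X) n := by
  induction n generalizing X with
  | zero =>
    have := injective_iff_hasInjectiveDimensionLT_one.2 hX
    exact injective_iff_hasInjectiveDimensionLT_one.1 (F.injective_obj X)
  | succ n ih =>
    have hS : (ShortComplex.mk (Injective.ι X) _ (Limits.cokernel.condition _)).ShortExact :=
      { exact := ShortComplex.exact_cokernel _ }
    refine ((hS.map_of_exact F).hasInjectiveDimensionLT_X₃_iff n
      (F.injective_obj (Injective.under X))).1 (ih ?_)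
    exact (hS.hasInjectiveDimensionLT_X₃_iff n inferInstance).2 hX

/-- `B` as an `S`-module by restriction of scalars is the `S`-algebra `B`; the two scalar actions
agree only propositionally. -/
def restrictScalarsSelfEquiv (S B : Type u) [CommRing S] [CommRing B] [Algebra S B] :
    (ModuleCat.restrictScalars (algebraMap S B)).obj (ModuleCat.of B B) ≃ₗ[S] B :=
  { toFun b := b
    invFun b := b
    map_add' _ _ := rfl
    map_smul' s b := (Algebra.smul_def s (show B from b)).symm }

lemma hasInjectiveDimensionLE_coextendScalars {S B : Type u} [CommRing S] [CommRing B]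
    [Algebra S B] [Module.Projective S B] {M : ModuleCat.{u} S} {n : ℕ}
    (hM : HasInjectiveDimensionLE M n) :
    HasInjectiveDimensionLE ((ModuleCat.coextendScalars (algebraMap S B)).obj M) n := by
  let F := ModuleCat.coextendScalars.{u, u, u} (algebraMap S B)
  have : F.IsRightAdjoint := (ModuleCat.restrictCoextendScalarsAdj _).isRightAdjoint
  have : F.Additive := F.additive_of_preserves_binary_products
  have : F.PreservesInjectiveObjects :=
    Functor.preservesInjectiveObjects_of_adjunction_of_preservesMonomorphisms
      (ModuleCat.restrictCoextendScalarsAdj.{u, u, u} (algebraMap S B))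
  have : F.PreservesEpimorphisms := by
    refine ⟨fun {X Y} g _ => (ModuleCat.epi_iff_surjective _).2 fun φ => ?_⟩
    have := Module.Projective.of_equiv (restrictScalarsSelfEquiv S B).symm
    obtain ⟨ψ, hψ⟩ := Module.projective_lifting_property g.hom
      (ModuleCat.CoextendScalars.equiv _ Y φ) ((ModuleCat.epi_iff_surjective g).1 inferInstance)
    exact ⟨(ModuleCat.CoextendScalars.equiv _ X).symm ψ, ModuleCat.CoextendScalars.ext hψ⟩
  have : F.PreservesHomology := F.preservesHomology_of_preservesEpis_and_kernels
  have : Limits.PreservesFiniteColimits F := F.preservesFiniteColimits_of_preservesHomology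
  exact hasInjectiveDimensionLE_map F hM

section Polynomial

open Polynomial

variable (R : Type u) [CommRing R] (N : Type u) [AddCommGroup N] [Module R N]

/-- The coinduced `R[X]`-module `Hom_R(R[X], N)`. -/
abbrev coinduced : ModuleCat.{u} R[X] :=
  (ModuleCat.coextendScalars (algebraMap R R[X])).obj (ModuleCat.of R N)

/-- The elements of the coinduced module as linear maps for the `R`-algebra structure of `R[X]`. -/
def coinducedEquiv : coinduced R N ≃+ (R[X] →ₗ[R] N) :=
  (ModuleCat.CoextendScalars.equiv _ _).toAddEquiv.trans
    ((restrictScalarsSelfEquiv R R[X]).arrowCongr (LinearEquiv.refl R N)).toAddEquiv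

variable {R N}

lemma coinducedEquiv_smul (p : R[X]) (φ : coinduced R N) (q : R[X]) :
    coinducedEquiv R N (p • φ) q = coinducedEquiv R N φ (q * p) :=
  rfl

variable (R N) [Module R[X] N] [IsScalarTower R R[X] N]

/-- The embedding of `N` into `Hom_R(R[X], N)` as the `R[X]`-linear maps. -/
def toCoinduced : N →ₗ[R[X]] coinduced R N where
  toFun y := (coinducedEquiv R N).symm ((LinearMap.toSpanSingleton R[X] N y).restrictScalars R)
  map_add' y z := (coinducedEquiv R N).injective <| LinearMap.ext fun q => by simp
  map_smul' p y := (coinducedEquiv R N).injective <| LinearMap.ext fun q => by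
    simp [coinducedEquiv_smul, mul_smul]

/-- The endomorphism `φ ↦ (q ↦ X φ(q) - φ(q X))` of `Hom_R(R[X], N)`; its kernel consists of the
`R[X]`-linear maps. -/
def coinducedDifference : coinduced R N →ₗ[R[X]] coinduced R N where
  toFun φ := (coinducedEquiv R N).symm
    (Algebra.lsmul R R N (X : R[X]) ∘ₗ coinducedEquiv R N φ) - (X : R[X]) • φ
  map_add' φ ψ := (coinducedEquiv R N).injective <| LinearMap.ext fun q => by
    simp [coinducedEquiv_smul]; abel
  map_smul' p φ := (coinducedEquiv R N).injective <| LinearMap.ext fun q => by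
    simp [coinducedEquiv_smul, mul_right_comm, mul_assoc]

variable {R N}

lemma coinducedEquiv_toCoinduced (y : N) (q : R[X]) :
    coinducedEquiv R N (toCoinduced R N y) q = q • y := by
  simp [toCoinduced]

lemma coinducedEquiv_coinducedDifference (φ : coinduced R N) (q : R[X]) :
    coinducedEquiv R N (coinducedDifference R N φ) q =
      (X : R[X]) • coinducedEquiv R N φ q - coinducedEquiv R N φ (q * X) := by
  simp [coinducedDifference, coinducedEquiv_smul]

lemma toCoinduced_injective : Function.Injective (toCoinduced R N) := fun y z hyz => by
  simpa [coinducedEquiv_toCoinduced] using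
    congrArg (fun φ => coinducedEquiv R N φ 1) hyz

lemma exact_toCoinduced_coinducedDifference :
    Function.Exact (toCoinduced R N) (coinducedDifference R N) := by
  refine fun φ => ⟨fun hφ => ⟨coinducedEquiv R N φ 1, ?_⟩, ?_⟩
  · have map_mul_X (q : R[X]) :
        coinducedEquiv R N φ (q * X) = (X : R[X]) • coinducedEquiv R N φ q := by
      rw [eq_comm, ← sub_eq_zero, ← coinducedEquiv_coinducedDifference, hφ, map_zero,
        LinearMap.zero_apply]
    refine (coinducedEquiv R N).injective ((basisMonomials R).ext fun k => ?_)
    simp only [coinducedEquiv_toCoinduced, coe_basisMonomials, ← X_pow_eq_monomial]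
    induction k with
    | zero => simp
    | succ k ih => rw [pow_succ, map_mul_X, ← ih, smul_smul, mul_comm]
  · rintro ⟨y, rfl⟩
    refine (coinducedEquiv R N).injective (LinearMap.ext fun q => ?_)
    simp [coinducedEquiv_coinducedDifference, coinducedEquiv_toCoinduced, smul_smul, mul_comm]

lemma coinducedDifference_surjective : Function.Surjective (coinducedDifference R N) := by
  intro ψ
  let a : ℕ → N := Nat.rec 0 fun k b => (X : R[X]) • b - coinducedEquiv R N ψ (X ^ k)
  let φ : coinduced R N := (coinducedEquiv R N).symm ((basisMonomials R).constr R a)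
  have map_X_pow (k : ℕ) : coinducedEquiv R N φ (X ^ k) = a k := by
    rw [AddEquiv.apply_symm_apply, ← (basisMonomials R).constr_basis R a k, coe_basisMonomials,
      X_pow_eq_monomial]
  refine ⟨φ, (coinducedEquiv R N).injective ((basisMonomials R).ext fun k => ?_)⟩
  simp only [coinducedEquiv_coinducedDifference, coe_basisMonomials, ← X_pow_eq_monomial,
    ← pow_succ, map_X_pow]
  exact sub_sub_cancel _ _

lemma hasInjectiveDimensionLE_polynomial {n : ℕ}
    (hN : HasInjectiveDimensionLE (ModuleCat.of R N) n) :
    HasInjectiveDimensionLE (ModuleCat.of R[X] N) (n + 1) := by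
  let S := ModuleCat.shortComplexOfCompEqZero (toCoinduced R N) (coinducedDifference R N)
    exact_toCoinduced_coinducedDifference.linearMap_comp_eq_zero
  have hS : S.ShortExact := ModuleCat.shortComplex_shortExact S
    exact_toCoinduced_coinducedDifference toCoinduced_injective coinducedDifference_surjective
  have hS₃ : HasInjectiveDimensionLT S.X₃ (n + 1) := hasInjectiveDimensionLE_coextendScalars hN
  exact hS.hasInjectiveDimensionLT_X₁ (n + 1) hS₃
    (hasInjectiveDimensionLT_of_ge S.X₃ (n + 1) _ (by lia))

end Polynomial

lemma injective_finsupp {R : Type u} [CommRing R] [IsNoetherianRing R] (ι : Type u) (E : Type u)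
    [AddCommGroup E] [Module R E] [hE : Module.Injective R E] : Module.Injective R (ι →₀ E) := by
  classical
  refine Module.Baer.injective fun I g => ?_
  obtain ⟨T, hT⟩ := (Module.Finite.fg_top : (⊤ : Submodule R I).FG)
  let F : Finset ι := T.biUnion fun x => (g x).support
  have g_mem (x : I) : g x ∈ Finsupp.supported E R (F : Set ι) := by
    have : (⊤ : Submodule R I) ≤ (Finsupp.supported E R (F : Set ι)).comap g := by
      rw [← hT, Submodule.span_le]
      intro x hx
      exact_mod_cast Finset.subset_biUnion_of_mem (fun x => (g x).support) hx
    exact this trivial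
  choose h hh using fun k : ι => Module.Baer.of_injective hE I (Finsupp.lapply k ∘ₗ g)
  refine ⟨∑ k ∈ F, Finsupp.lsingle k ∘ₗ h k, fun x hx => Finsupp.ext fun m => ?_⟩
  have g_eq_zero := (Finsupp.mem_supported' R _).1 (g_mem ⟨x, hx⟩) m
  by_cases hm : m ∈ F
  · simp [hh _ x hx, Finsupp.single_apply, hm]
  · simp [hh _ x hx, Finsupp.single_apply, hm, g_eq_zero (by simpa using hm)]

lemma exact_finsupp_mapRange {R M N P : Type*} [CommRing R] [AddCommGroup M] [AddCommGroup N]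
    [AddCommGroup P] [Module R M] [Module R N] [Module R P] (ι : Type*) {g : M →ₗ[R] N}
    {h : N →ₗ[R] P} (hgh : Function.Exact g h) :
    Function.Exact (Finsupp.mapRange.linearMap (α := ι) g) (Finsupp.mapRange.linearMap h) := by
  classical
  intro y
  constructor
  · intro hy
    choose x hx using fun k => (hgh (y k)).1 (DFunLike.congr_fun hy k)
    refine ⟨Finsupp.onFinset y.support (fun k => if y k = 0 then 0 else x k) (by simp_all), ?_⟩
    ext k
    by_cases hk : y k = 0 <;> simp [hk, hx]
  · rintro ⟨x, rfl⟩
    ext k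
    simpa using hgh.apply_apply_eq_zero (x k)

/-- The functor `M ↦ ⨁ M` taking direct sums of copies indexed by `ι`. -/
def finsuppFunctor (R : Type u) [CommRing R] (ι : Type u) : ModuleCat.{u} R ⥤ ModuleCat.{u} R where
  obj M := ModuleCat.of R (ι →₀ M)
  map g := ModuleCat.ofHom (Finsupp.mapRange.linearMap g.hom)

lemma hasInjectiveDimensionLE_finsupp {R : Type u} [CommRing R] [IsNoetherianRing R] (ι : Type u)
    {M : ModuleCat.{u} R} {n : ℕ} (hM : HasInjectiveDimensionLE M n) :
    HasInjectiveDimensionLE (ModuleCat.of R (ι →₀ M)) n := by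
  let F := finsuppFunctor R ι
  have : F.Additive := ⟨fun {M N g h} => ModuleCat.hom_ext <| LinearMap.ext fun x =>
    Finsupp.ext fun k => rfl⟩
  have : F.PreservesInjectiveObjects := ⟨fun {E} hE => by
    have : Module.Injective R E := (Module.injective_iff_injective_object ..).2 hE
    exact (Module.injective_iff_injective_object ..).1 (injective_finsupp ι E)⟩
  have h_exact (S : ShortComplex (ModuleCat.{u} R)) (hS : S.Exact) : (S.map F).Exact := by
    rw [ShortComplex.ShortExact.moduleCat_exact_iff_function_exact] at hS ⊢
    exact exact_finsupp_mapRange ι hS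
  obtain ⟨_, _⟩ := (F.exact_tfae.out 1 3).1 h_exact
  exact hasInjectiveDimensionLE_map F hM

end InjectiveDimension

/-! ### Gorenstein rings and Frobenius algebras -/

section Gorenstein

lemma selfInjDimLE_of_ringEquiv {A B : Type u} [CommRing A] [CommRing B] (e : A ≃+* B) {n : ℕ}
    (h : selfInjDimLE A n) : selfInjDimLE B n := by
  rw [selfInjDimLE_iff_hasInjectiveDimensionLE] at h ⊢
  have := RingHomInvPair.of_ringEquiv e
  have := RingHomInvPair.of_ringEquiv e.symm
  let e' : A ≃ₛₗ[RingHomClass.toRingHom e] B :=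
    { e.toAddEquiv with map_smul' := fun a b => map_mul e a b }
  exact (ModuleCat.hasInjectiveDimensionLE_iff_of_semiLinearEquiv e e' n).1 h

lemma selfInjDimLE_localization {A : Type u} [CommRing A] [IsNoetherianRing A] (M : Submonoid A)
    {n : ℕ} (h : selfInjDimLE A n) : selfInjDimLE (Localization M) n := by
  rw [selfInjDimLE_iff_hasInjectiveDimensionLE] at h ⊢
  have := ModuleCat.localizedModule_isLocalizedModule (ModuleCat.of A A) M
  let e : (ModuleCat.of A A).localizedModule M ≃ₗ[Localization M] Localization M :=
    (IsLocalizedModule.linearEquiv M ((ModuleCat.of A A).localizedModuleMkLinearMap M)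
      (Algebra.linearMap A (Localization M))).extendScalarsOfIsLocalization M (Localization M)
  exact (ModuleCat.hasInjectiveDimensionLE_iff_of_linearEquiv e n).1
    (ModuleCat.localizedModule_hasInjectiveDimensionLE n M _)

lemma isGorensteinRing_of_localization {S B : Type u} [CommRing S] [CommRing B] [Algebra S B]
    [IsNoetherianRing B] (h : ∀ (q : Ideal S) [q.IsPrime],
      ∃ n, selfInjDimLE (Localization (Algebra.algebraMapSubmonoid B q.primeCompl)) n) :
    IsGorensteinRing B := by
  refine ⟨inferInstance, fun Q _ => ?_⟩
  let q := Q.comap (algebraMap S B)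
  let M := Algebra.algebraMapSubmonoid B q.primeCompl
  have hMQ : M ≤ Q.primeCompl := Submonoid.map_le_iff_le_comap.2 fun _ hs => hs
  obtain ⟨n, hn⟩ := h q
  let _ := IsLocalization.localizationAlgebraOfSubmonoidLe (Localization M)
    (Localization.AtPrime Q) M Q.primeCompl hMQ
  have := IsLocalization.localization_isScalarTower_of_submonoid_le (Localization M)
    (Localization.AtPrime Q) M Q.primeCompl hMQ
  have := IsLocalization.isLocalization_of_submonoid_le (Localization M)
    (Localization.AtPrime Q) M Q.primeCompl hMQ
  have := IsLocalization.isNoetherianRing M (Localization M) inferInstance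
  let N := Q.primeCompl.map (algebraMap B (Localization M))
  exact ⟨n, selfInjDimLE_of_ringEquiv
    (IsLocalization.algEquiv N (Localization N) (Localization.AtPrime Q)).toRingEquiv
    (selfInjDimLE_localization N hn)⟩

section Polynomial
open Polynomial

lemma selfInjDimLE_polynomial {A : Type u} [CommRing A] [IsNoetherianRing A] {n : ℕ}
    (h : selfInjDimLE A n) : selfInjDimLE A[X] (n + 1) := by
  rw [selfInjDimLE_iff_hasInjectiveDimensionLE] at h ⊢
  refine hasInjectiveDimensionLE_polynomial ?_
  let e : (ULift.{u} ℕ →₀ A) ≃ₗ[A] A[X] :=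
    ((basisMonomials A).reindex Equiv.ulift.symm).repr.symm
  exact (ModuleCat.hasInjectiveDimensionLE_iff_of_linearEquiv e n).1
    (hasInjectiveDimensionLE_finsupp (ULift.{u} ℕ) h)

attribute [local instance] Polynomial.algebra in
lemma isGorensteinRing_polynomial {R : Type u} [CommRing R] (h : IsGorensteinRing R) :
    IsGorensteinRing R[X] := by
  have := h.1
  refine isGorensteinRing_of_localization (S := R) fun q _ => ?_
  obtain ⟨n, hn⟩ := h.2 q
  have := IsLocalization.isNoetherianRing q.primeCompl (Localization.AtPrime q) inferInstance
  let M := Algebra.algebraMapSubmonoid R[X] q.primeCompl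
  have : IsLocalization M (Localization.AtPrime q)[X] := isLocalization _ _
  exact ⟨n + 1, selfInjDimLE_of_ringEquiv
    (IsLocalization.algEquiv M (Localization.AtPrime q)[X] (Localization M)).toRingEquiv
    (selfInjDimLE_polynomial hn)⟩

end Polynomial

lemma isGorensteinRing_of_ringEquiv {A B : Type u} [CommRing A] [CommRing B] (e : A ≃+* B)
    (h : IsGorensteinRing A) : IsGorensteinRing B := by
  have := h.1
  refine ⟨isNoetherianRing_of_ringEquiv A e, fun Q _ => ?_⟩
  obtain ⟨n, hn⟩ := h.2 (Q.comap e)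
  exact ⟨n, selfInjDimLE_of_ringEquiv
    (Localization.localRingEquiv _ Q e rfl) hn⟩

lemma isGorensteinRing_mvPolynomial {R : Type u} [CommRing R] (h : IsGorensteinRing R) (n : ℕ) :
    IsGorensteinRing (MvPolynomial (Fin n) R) := by
  induction n with
  | zero => exact isGorensteinRing_of_ringEquiv (MvPolynomial.isEmptyRingEquiv R (Fin 0)).symm h
  | succ n ih =>
    exact isGorensteinRing_of_ringEquiv (MvPolynomial.finSuccEquiv R n).symm.toRingEquiv
      (isGorensteinRing_polynomial ih)

end Gorenstein
section Frobenius
open TensorProduct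

/-- `B` is a Frobenius algebra over `S`: there are a trace form `τ` and a finite pair of dual
generating families `e`, `e'` with respect to the pairing `(a, b) ↦ τ (a * b)`. -/
def IsFrobeniusAlgebra (S B : Type*) [CommRing S] [CommRing B] [Algebra S B] : Prop :=
  ∃ (n : ℕ) (e e' : Fin n → B) (τ : B →ₗ[S] S),
    (∀ b, ∑ i, τ (b * e' i) • e i = b) ∧ ∀ b, ∑ i, τ (b * e i) • e' i = b

lemma isFrobeniusAlgebra_baseChange {S B : Type*} (S' : Type*) [CommRing S] [CommRing B]
    [Algebra S B] [CommRing S'] [Algebra S S'] (h : IsFrobeniusAlgebra S B) :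
    IsFrobeniusAlgebra S' (S' ⊗[S] B) := by
  obtain ⟨n, e, e', τ, h₁, h₂⟩ := h
  let τ' : S' ⊗[S] B →ₗ[S'] S' :=
    (AlgebraTensorModule.rid S S' S').toLinearMap ∘ₗ τ.baseChange S'
  have τ'_tmul (s : S') (b : B) : τ' (s ⊗ₜ b) = τ b • s := by simp [τ']
  have dual_baseChange {e e' : Fin n → B} (h : ∀ b, ∑ i, τ (b * e' i) • e i = b)
      (b : S' ⊗[S] B) : ∑ i, τ' (b * (1 ⊗ₜ e' i)) • (1 ⊗ₜ[S] e i : S' ⊗[S] B) = b := by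
    induction b with
    | zero => simp
    | add x y hx hy => simp only [add_mul, map_add, add_smul, Finset.sum_add_distrib, hx, hy]
    | tmul s a =>
      conv_rhs => rw [← h a, tmul_sum]
      refine Finset.sum_congr rfl fun i _ => ?_
      rw [Algebra.TensorProduct.tmul_mul_tmul, mul_one, τ'_tmul, smul_tmul', smul_eq_mul, mul_one,
        ← smul_tmul]
  exact ⟨n, _, _, τ', dual_baseChange h₁, dual_baseChange h₂⟩

lemma finite_of_isFrobeniusAlgebra {S B : Type*} [CommRing S] [CommRing B] [Algebra S B]
    (h : IsFrobeniusAlgebra S B) : Module.Finite S B := by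
  obtain ⟨n, e, e', τ, h₁, -⟩ := h
  refine .of_surjective (Fintype.linearCombination S e) fun b => ⟨fun i => τ (b * e' i), ?_⟩
  simpa [Fintype.linearCombination_apply] using h₁ b

lemma projective_of_isFrobeniusAlgebra {S B : Type*} [CommRing S] [CommRing B] [Algebra S B]
    (h : IsFrobeniusAlgebra S B) : Module.Projective S B := by
  obtain ⟨n, e, e', τ, h₁, -⟩ := h
  refine Module.Projective.of_split (LinearMap.pi fun k => τ ∘ₗ LinearMap.mulRight S (e' k))
    (Fintype.linearCombination S e) (LinearMap.ext fun b => ?_)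
  simpa [Fintype.linearCombination_apply] using h₁ b

-- The trace form identifies `B` with its `S`-dual, the coextension of scalars of `S`.
lemma exists_linearEquiv_coextendScalars_of_isFrobeniusAlgebra {S B : Type u} [CommRing S]
    [CommRing B] [Algebra S B] (h : IsFrobeniusAlgebra S B) :
    Nonempty ((ModuleCat.coextendScalars (algebraMap S B)).obj (ModuleCat.of S S) ≃ₗ[B] B) := by
  obtain ⟨n, e, e', τ, h₁, h₂⟩ := h
  let dual : (ModuleCat.coextendScalars (algebraMap S B)).obj (ModuleCat.of S S) ≃+
      (B →ₗ[S] S) :=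
    (ModuleCat.CoextendScalars.equiv _ _).toAddEquiv.trans
      ((restrictScalarsSelfEquiv S B).arrowCongr (LinearEquiv.refl S S)).toAddEquiv
  let toDual : B ≃+ (B →ₗ[S] S) :=
    { toFun b := τ ∘ₗ LinearMap.mulLeft S b
      invFun φ := ∑ i, φ (e i) • e' i
      left_inv b := h₂ b
      right_inv φ := LinearMap.ext fun b => by
        conv_rhs => rw [← h₁ b]
        simp [Finset.mul_sum, mul_comm]
      map_add' a b := LinearMap.ext fun c => by simp [add_mul] }
  refine ⟨LinearEquiv.symm { toDual.trans dual.symm with map_smul' := fun b c => ?_ }⟩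
  refine dual.injective (LinearMap.ext fun d => ?_)
  change dual (dual.symm (toDual (b • c))) d = dual (dual.symm (toDual c)) (d * b)
  simp only [AddEquiv.apply_symm_apply]
  change τ (b * c * d) = τ (c * (d * b))
  congr 1
  ring

lemma selfInjDimLE_of_isFrobeniusAlgebra {S B : Type u} [CommRing S]
    [CommRing B] [Algebra S B] (h : IsFrobeniusAlgebra S B) {n : ℕ} (hS : selfInjDimLE S n) :
    selfInjDimLE B n := by
  have := projective_of_isFrobeniusAlgebra h
  rw [selfInjDimLE_iff_hasInjectiveDimensionLE] at hS ⊢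
  obtain ⟨e⟩ := exists_linearEquiv_coextendScalars_of_isFrobeniusAlgebra h
  exact (ModuleCat.hasInjectiveDimensionLE_iff_of_linearEquiv e n).1
    (hasInjectiveDimensionLE_coextendScalars hS)

lemma isGorensteinRing_of_isFrobeniusAlgebra {S B : Type u} [CommRing S] [CommRing B]
    [Algebra S B] (h : IsFrobeniusAlgebra S B) (hS : IsGorensteinRing S) :
    IsGorensteinRing B := by
  have := hS.1
  have := finite_of_isFrobeniusAlgebra h
  have := IsNoetherianRing.of_finite S B
  refine isGorensteinRing_of_localization (S := S) fun q _ => ?_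
  obtain ⟨n, hn⟩ := hS.2 q
  let e : Localization.AtPrime q ⊗[S] B ≃ₐ[S]
    B ⊗[S] Localization.AtPrime q := Algebra.TensorProduct.comm _ _ _
  exact ⟨n, selfInjDimLE_of_ringEquiv (e.toRingEquiv.trans (IsLocalization.algEquiv
    (Algebra.algebraMapSubmonoid B q.primeCompl) (B ⊗[S] Localization.AtPrime q) _).toRingEquiv)
    (selfInjDimLE_of_isFrobeniusAlgebra (isFrobeniusAlgebra_baseChange _ h) hn)⟩

end Frobenius

/-! ### Factorial finite free extensions -/

section FactorialExtension

variable {S A : Type*} [CommRing S] [CommRing A] [Algebra S A]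

/-- The map `a ↦ τ(a · )`: for `τ` in the `A`-module `Hom_S(A, S)`, this is `a ↦ a τ`. -/
def precompMul (τ : A →ₗ[S] S) : A →ₗ[S] A →ₗ[S] S :=
  (LinearMap.mul S A).compr₂ τ

@[simp]
lemma precompMul_apply (τ : A →ₗ[S] S) (a x : A) : precompMul τ a x = τ (a * x) :=
  rfl

lemma isFrobeniusAlgebra_of_surjective_precompMul [Module.Finite S A] [Module.Free S A]
    {τ : A →ₗ[S] S} (hτ : Function.Surjective (precompMul τ)) : IsFrobeniusAlgebra S A := by
  let b := (Module.Free.chooseBasis S A).reindex (Fintype.equivFin _)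
  choose c hc using fun i => hτ (b.coord i)
  have sum_basis (x : A) : ∑ i, τ (x * c i) • b i = x := by
    conv_rhs => rw [← b.sum_repr x]
    exact Finset.sum_congr rfl fun i _ => by rw [mul_comm, ← precompMul_apply, hc, b.coord_apply]
  refine ⟨_, b, c, τ, sum_basis, fun x => ?_⟩
  have trace_eq (j) : τ ((∑ i, τ (x * b i) • c i) * c j) = τ (x * c j) := by
    conv_rhs => rw [← sum_basis (c j)]
    simp only [Finset.mul_sum, map_sum, mul_smul_comm, map_smul, smul_eq_mul, mul_comm]
  rw [← sum_basis (∑ i, τ (x * b i) • c i)]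
  simp only [trace_eq, sum_basis]

lemma dvd_of_forall_dvd_mul [UniqueFactorizationMonoid S] {I : Ideal S}
    (hI : ∀ q : S, Prime q → ∃ n ∈ I, ¬ q ∣ n) {m : S} (hm : m ≠ 0) {y : S}
    (hy : ∀ n ∈ I, m ∣ n * y) : m ∣ y := by
  induction m using UniqueFactorizationMonoid.induction_on_prime generalizing y with
  | h₁ => exact absurd rfl hm
  | h₂ u hu => exact hu.dvd
  | h₃ a q ha hq ih =>
    obtain ⟨n, hn, hqn⟩ := hI q hq
    obtain ⟨z, rfl⟩ := (hq.dvd_or_dvd ((dvd_mul_right q a).trans (hy n hn))).resolve_left hqn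
    refine mul_dvd_mul_left q (ih ha fun n hn => ?_)
    rw [← mul_dvd_mul_iff_left hq.ne_zero, mul_left_comm]
    exact hy n hn

variable [IsDomain S] [IsDomain A] [Module.Finite S A]

lemma exists_algebraMap_eq_mul {a : A} (ha : a ≠ 0) :
    ∃ m : S, m ≠ 0 ∧ ∃ c, algebraMap S A m = a * c :=
  (Algebra.IsIntegral.isIntegral a).isAlgebraic.exists_nonzero_dvd
    (mem_nonZeroDivisors_of_ne_zero ha)

lemma eq_zero_of_precompMul_eq_zero {τ : A →ₗ[S] S} {a : A} (ha : a ≠ 0)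
    (h : precompMul τ a = 0) : τ = 0 := by
  obtain ⟨m, hm, c, hc⟩ := exists_algebraMap_eq_mul (S := S) ha
  ext x
  have hx := LinearMap.congr_fun h (c * x)
  rw [precompMul_apply, ← mul_assoc, ← hc, ← Algebra.smul_def, map_smul] at hx
  simpa [hm] using hx

-- The ideal `(b, p)` has height at least two, hence so does its contraction to `S`.
lemma exists_mem_comap_span_pair_not_dvd [UniqueFactorizationMonoid S] {b p : A} (hp : Prime p)
    (hb : ¬ p ∣ b) {q : S} (hq : Prime q) :
    ∃ n ∈ (Ideal.span {b, p}).comap (algebraMap S A), ¬ q ∣ n := by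
  by_contra! h_dvd
  have hle : (Ideal.span {b, p}).comap (algebraMap S A) ≤ Ideal.span {q} := fun n hn =>
    Ideal.mem_span_singleton.2 (h_dvd n hn)
  have hq_prime : (Ideal.span {q}).IsPrime := (Ideal.span_singleton_prime hq.ne_zero).2 hq
  obtain ⟨Q, hQ, -, hQ_comap⟩ := Ideal.exists_ideal_over_prime_of_isIntegral _ _ hle
  have hp_prime : (Ideal.span {p}).IsPrime := (Ideal.span_singleton_prime hp.ne_zero).2 hp
  have hlt : (Ideal.span {p}).comap (algebraMap S A) < Ideal.span {q} := hQ_comap ▸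
    Ideal.comap_lt_comap_of_integral_mem_sdiff
      ((Ideal.span_singleton_le_iff_mem _).2 (hQ (Ideal.subset_span (by simp)))) (x := b)
      ⟨hQ (Ideal.subset_span (by simp)), fun h => hb (Ideal.mem_span_singleton.1 h)⟩
      (Algebra.IsIntegral.isIntegral (R := S) b)
  obtain ⟨m, hm, c, hc⟩ := exists_algebraMap_eq_mul (S := S) hp.ne_zero
  have hne : (Ideal.span {p}).comap (algebraMap S A) ≠ ⊥ := Submodule.ne_bot_iff _ |>.2
    ⟨m, Ideal.mem_span_singleton.2 ⟨c, hc⟩, hm⟩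
  obtain ⟨π, hπ, hπ_prime⟩ := Ideal.IsPrime.exists_mem_prime_of_ne_bot inferInstance hne
  have h_assoc := hq.associated_of_dvd hπ_prime (Ideal.mem_span_singleton.1 (hlt.le hπ))
  exact hlt.not_ge ((Ideal.span_singleton_le_iff_mem _).2
    ((Ideal.mem_iff_of_associated h_assoc).2 hπ))

lemma exists_eq_precompMul_of_prime [UniqueFactorizationMonoid S] {τ σ : A →ₗ[S] S} {b p : A}
    (hp : Prime p) (hb : ¬ p ∣ b) (h : precompMul τ b = precompMul σ p) :
    ∃ τ' : A →ₗ[S] S, τ = precompMul τ' p := by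
  obtain ⟨m, hm, c, hc⟩ := exists_algebraMap_eq_mul (S := S) hp.ne_zero
  have dvd_apply (x : A) : m ∣ τ (c * x) := by
    refine dvd_of_forall_dvd_mul (fun q => exists_mem_comap_span_pair_not_dvd hp hb) hm
      fun n hn => ?_
    obtain ⟨v, w, hvw⟩ := Ideal.mem_span_pair.1 (Ideal.mem_comap.1 hn)
    refine ⟨σ (x * v) + τ (x * w), ?_⟩
    calc n * τ (c * x) = τ (b * (c * x * v)) + τ (p * c * (x * w)) := by
          rw [← smul_eq_mul, ← map_smul, Algebra.smul_def, ← hvw, ← map_add]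
          congr 1
          ring
      _ = σ (p * c * (x * v)) + τ (p * c * (x * w)) := by
          rw [← precompMul_apply τ, h, precompMul_apply]
          congr 2
          ring
      _ = m * (σ (x * v) + τ (x * w)) := by
          simp only [← hc, ← Algebra.smul_def, map_smul, smul_eq_mul, mul_add]
  choose g hg using dvd_apply
  refine ⟨{ toFun := g, map_add' := fun x y => ?_, map_smul' := fun r x => ?_ },
    LinearMap.ext fun x => ?_⟩ <;> apply mul_left_cancel₀ hm
  · rw [← hg, mul_add, map_add, hg, hg, mul_add]
  · rw [← hg, mul_smul_comm, map_smul, hg, RingHom.id_apply, smul_eq_mul, smul_eq_mul,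
      mul_left_comm]
  · change _ = m * g (p * x)
    rw [← hg, ← mul_assoc, mul_comm c p, ← hc, ← Algebra.smul_def, map_smul, smul_eq_mul]

/-- A nonzero form that is not a multiple of another form by a nonunit. -/
def IsPrimitiveForm (τ : A →ₗ[S] S) : Prop :=
  τ ≠ 0 ∧ ∀ (p : A) (τ' : A →ₗ[S] S), τ = precompMul τ' p → IsUnit p

variable [Module.Free S A]

lemma exists_isPrimitiveForm [IsNoetherianRing S] : ∃ τ : A →ₗ[S] S, IsPrimitiveForm τ := by
  have h_nonempty : {N | ∃ τ : A →ₗ[S] S, τ ≠ 0 ∧ (precompMul τ).range = N}.Nonempty := by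
    obtain ⟨τ, hτ⟩ := exists_ne (0 : A →ₗ[S] S)
    exact ⟨_, τ, hτ, rfl⟩
  obtain ⟨_, ⟨τ, hτ, rfl⟩, h_max⟩ := set_has_maximal_iff_noetherian.2
    (inferInstanceAs (IsNoetherian S (A →ₗ[S] S))) _ h_nonempty
  refine ⟨τ, hτ, fun p τ' h => ?_⟩
  have hτ' : τ' ≠ 0 := by
    rintro rfl
    exact hτ (h.trans (LinearMap.ext fun x => rfl))
  have h_le : (precompMul τ).range ≤ (precompMul τ').range := by
    rintro _ ⟨a, rfl⟩
    exact ⟨p * a, LinearMap.ext fun x => by simp [h, mul_assoc]⟩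
  have h_eq := eq_of_le_of_not_lt h_le (h_max _ ⟨τ', hτ', rfl⟩)
  obtain ⟨a, ha⟩ : τ' ∈ (precompMul τ).range :=
    h_eq ▸ ⟨1, LinearMap.ext fun x => by simp⟩
  have h_zero : precompMul τ' (1 - p * a) = 0 := LinearMap.ext fun x => by
    have hx : precompMul τ a x = τ' x := LinearMap.congr_fun ha x
    rw [h, precompMul_apply, precompMul_apply] at hx
    rw [precompMul_apply, sub_mul, one_mul, map_sub, mul_assoc, hx, sub_self,
      LinearMap.zero_apply]
  by_contra hp
  exact hτ' (eq_zero_of_precompMul_eq_zero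
    (fun h => hp (IsUnit.of_mul_eq_one a (sub_eq_zero.1 h).symm)) h_zero)

lemma exists_precompMul_eq_precompMul {τ : A →ₗ[S] S} (hτ : τ ≠ 0) (σ : A →ₗ[S] S) :
    ∃ a c : A, a ≠ 0 ∧ precompMul σ a = precompMul τ c := by
  have h_inj : Function.Injective (precompMul τ) := (injective_iff_map_eq_zero _).2 fun a ha =>
    by_contra fun h => hτ (eq_zero_of_precompMul_eq_zero h ha)
  have finrank_quotient : Module.finrank S ((A →ₗ[S] S) ⧸ (precompMul τ).range) = 0 := by
    have := (precompMul τ).range.finrank_quotient_add_finrank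
    rw [LinearMap.finrank_range_of_inj h_inj, Module.finrank_linearMap_self] at this
    lia
  obtain ⟨⟨s, hs⟩, h⟩ := Module.finrank_eq_zero_iff_isTorsion.1 finrank_quotient
    (x := (precompMul τ).range.mkQ σ)
  obtain ⟨c, hc⟩ := (Submodule.Quotient.mk_eq_zero _).1 h
  refine ⟨algebraMap S A s, c, by simpa using nonZeroDivisors.ne_zero hs, ?_⟩
  rw [hc]
  ext x
  simp [← Algebra.smul_def]

lemma IsPrimitiveForm.surjective_precompMul [UniqueFactorizationMonoid S]
    [UniqueFactorizationMonoid A] {τ : A →ₗ[S] S} (hτ : IsPrimitiveForm τ) :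
    Function.Surjective (precompMul τ) := by
  intro σ
  obtain ⟨a, c, ha, hac⟩ := exists_precompMul_eq_precompMul hτ.1 σ
  obtain ⟨a', c', d, h_coprime, rfl, rfl⟩ :=
    UniqueFactorizationMonoid.exists_reduced_factors a ha c
  have h_reduced : precompMul σ a' = precompMul τ c' := by
    rw [← sub_eq_zero]
    refine eq_zero_of_precompMul_eq_zero (left_ne_zero_of_mul ha) (LinearMap.ext fun x => ?_)
    simpa [sub_eq_zero, mul_assoc, mul_left_comm] using LinearMap.congr_fun hac x
  obtain ⟨u, rfl⟩ : IsUnit a' := by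
    by_contra h_unit
    obtain ⟨p, hp, r, rfl⟩ :=
      WfDvdMonoid.exists_irreducible_factor h_unit (right_ne_zero_of_mul ha)
    have hpc : ¬ p ∣ c' := fun h => hp.not_isUnit (h_coprime (dvd_mul_right p r) h)
    obtain ⟨τ', hτ'⟩ := exists_eq_precompMul_of_prime (σ := precompMul σ r) hp.prime hpc <| by
      rw [← h_reduced]
      ext x
      simp [mul_assoc, mul_left_comm]
    exact hp.not_isUnit (hτ.2 p τ' hτ')
  refine ⟨c' * ↑u⁻¹, LinearMap.ext fun x => ?_⟩
  simpa [mul_assoc] using (LinearMap.congr_fun h_reduced (↑u⁻¹ * x)).symm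

lemma isFrobeniusAlgebra_of_uniqueFactorizationMonoid [IsNoetherianRing S]
    [UniqueFactorizationMonoid S] [UniqueFactorizationMonoid A] : IsFrobeniusAlgebra S A :=
  let ⟨_, hτ⟩ := exists_isPrimitiveForm (S := S) (A := A)
  isFrobeniusAlgebra_of_surjective_precompMul hτ.surjective_precompMul

end FactorialExtension

/-! ### Straightening laws -/

section RestrictVars

open MvPolynomial

variable {k σ B : Type*} [CommRing k]

lemma sub_mem_of_forall_X_sub_mem [CommRing B] [Algebra k B] (φ ψ : MvPolynomial σ k →ₐ[k] B)
    {I : Ideal B} (h : ∀ a, φ (X a) - ψ (X a) ∈ I) (p : MvPolynomial σ k) : φ p - ψ p ∈ I := by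
  have : (Ideal.Quotient.mkₐ k I).comp φ = (Ideal.Quotient.mkₐ k I).comp ψ :=
    algHom_ext fun a => (Ideal.Quotient.mk_eq_mk_iff_sub_mem _ _).2 (h a)
  exact (Ideal.Quotient.mk_eq_mk_iff_sub_mem _ _).1 (DFunLike.congr_fun this p)

/-- The endomorphism of a polynomial ring that sets all variables outside `s` to zero. -/
def restrictVars (s : Set σ) : MvPolynomial σ k →ₐ[k] MvPolynomial σ k :=
  aeval (s.indicator X)

lemma restrictVars_X_of_mem {s : Set σ} {a : σ} (h : a ∈ s) :
    restrictVars s (X a : MvPolynomial σ k) = X a := by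
  simp [restrictVars, h]

lemma restrictVars_X_of_notMem {s : Set σ} {a : σ} (h : a ∉ s) :
    restrictVars s (X a : MvPolynomial σ k) = 0 := by
  simp [restrictVars, h]

@[simp]
lemma restrictVars_univ (p : MvPolynomial σ k) : restrictVars Set.univ p = p := by
  simp [restrictVars]

@[simp]
lemma restrictVars_empty (p : MvPolynomial σ k) :
    restrictVars ∅ p = C (constantCoeff p) := by
  rw [restrictVars, Set.indicator_empty]
  exact aeval_zero' p

open Classical in
lemma restrictVars_monomial (s : Set σ) (m : σ →₀ ℕ) (c : k) :
    restrictVars s (monomial m c) = if ↑m.support ⊆ s then monomial m c else 0 := by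
  rw [restrictVars, aeval_monomial, Finsupp.prod]
  split_ifs with h
  · rw [Finset.prod_congr rfl fun a ha => by rw [Set.indicator_of_mem (h ha)], monomial_eq]
    rfl
  · obtain ⟨a, ha, has⟩ := Set.not_subset.1 h
    rw [Finset.prod_eq_zero ha, mul_zero]
    rw [Set.indicator_of_notMem has, zero_pow (Finsupp.mem_support_iff.1 ha)]

open Classical in
lemma coeff_restrictVars (s : Set σ) (p : MvPolynomial σ k) (m : σ →₀ ℕ) :
    (restrictVars s p).coeff m = if ↑m.support ⊆ s then p.coeff m else 0 := by
  induction p using MvPolynomial.induction_on' with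
  | monomial n c =>
    rw [restrictVars_monomial]
    by_cases hn : n = m
    · subst hn
      split_ifs <;> simp
    · split_ifs <;> simp [coeff_monomial, hn]
  | add p q hp hq =>
    rw [map_add, coeff_add, hp, hq]
    split_ifs <;> simp

lemma constantCoeff_restrictVars (s : Set σ) (p : MvPolynomial σ k) :
    constantCoeff (restrictVars s p) = constantCoeff p := by
  simp [constantCoeff_eq, coeff_restrictVars]

lemma restrictVars_restrictVars_of_subset {s t : Set σ} (h : t ⊆ s) (p : MvPolynomial σ k) :
    restrictVars t (restrictVars s p) = restrictVars t p := by
  ext m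
  simp only [coeff_restrictVars]
  split_ifs with hmt hms
  exacts [rfl, absurd (hmt.trans h) hms, rfl]

@[simp]
lemma restrictVars_restrictVars (s : Set σ) (p : MvPolynomial σ k) :
    restrictVars s (restrictVars s p) = restrictVars s p :=
  restrictVars_restrictVars_of_subset subset_rfl p

lemma mem_support_restrictVars {s : Set σ} {p : MvPolynomial σ k} {m : σ →₀ ℕ} :
    m ∈ (restrictVars s p).support ↔ m ∈ p.support ∧ ↑m.support ⊆ s := by
  classical
  rw [mem_support_iff, coeff_restrictVars, mem_support_iff, ite_ne_right_iff, and_comm]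

lemma sub_restrictVars_mem_span (s : Set σ) (p : MvPolynomial σ k) :
    p - restrictVars s p ∈ Ideal.span (X '' sᶜ) := by
  refine sub_mem_of_forall_X_sub_mem (AlgHom.id k _) (restrictVars s) (fun a => ?_) p
  by_cases ha : a ∈ s
  · simp [restrictVars_X_of_mem ha]
  · simpa [restrictVars_X_of_notMem ha] using
      Ideal.subset_span (Set.mem_image_of_mem X ha)

lemma X_dvd_restrictVars_sub {s t : Set σ} {a : σ} (h : s ⊆ insert a t) (hts : t ⊆ s)
    (p : MvPolynomial σ k) : X a ∣ restrictVars s p - restrictVars t p := by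
  rw [← Ideal.mem_span_singleton]
  refine sub_mem_of_forall_X_sub_mem _ _ (fun b => ?_) p
  by_cases ht : b ∈ t
  · simp [restrictVars_X_of_mem ht, restrictVars_X_of_mem (hts ht)]
  by_cases hs : b ∈ s
  · obtain rfl : b = a := (h hs).resolve_right ht
    simp [restrictVars_X_of_mem hs, restrictVars_X_of_notMem ht]
  · simp [restrictVars_X_of_notMem hs, restrictVars_X_of_notMem ht]

lemma single_add_mem_support_X_mul {a : σ} {p : MvPolynomial σ k} {m : σ →₀ ℕ}
    (hm : m ∈ p.support) : Finsupp.single a 1 + m ∈ (X a * p).support := by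
  rw [support_X_mul]
  exact Finset.mem_map_of_mem _ hm

lemma support_subset_support_add_left (n m : σ →₀ ℕ) :
    (m.support : Set σ) ⊆ (n + m).support :=
  Finset.coe_subset.2 (Finsupp.support_mono le_add_self)

lemma X_dvd_of_forall_mem_support {a : σ} {p : MvPolynomial σ k}
    (h : ∀ m ∈ p.support, a ∈ m.support) : X a ∣ p := by
  rw [← Ideal.mem_span_singleton, ← Set.image_singleton, mem_ideal_span_X_image]
  exact fun m hm => ⟨a, rfl, Finsupp.mem_support_iff.1 (h m hm)⟩

lemma eq_zero_of_forall_X_pow_dvd [IsDomain k] {a : σ} {p : MvPolynomial σ k}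
    (h : ∀ n : ℕ, X a ^ n ∣ p) : p = 0 := by
  by_contra hp
  obtain ⟨q, hq⟩ := h (p.totalDegree + 1)
  have hq0 : q ≠ 0 := by
    rintro rfl
    exact hp (by simpa using hq)
  have hdeg := congrArg totalDegree hq
  rw [totalDegree_mul_of_isDomain (pow_ne_zero _ (X_ne_zero a)) hq0, totalDegree_X_pow] at hdeg
  lia

end RestrictVars

section GradedNakayama

open MvPolynomial

variable {k σ : Type*} [CommRing k]

lemma homogeneousComponent_mul_of_isHomogeneous {p q : MvPolynomial σ k} {e : ℕ}
    (hq : q.IsHomogeneous e) (n : ℕ) :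
    homogeneousComponent n (p * q) =
      if e ≤ n then homogeneousComponent (n - e) p * q else 0 := by
  let := gradedAlgebra (σ := σ) (R := k)
  have decompose_apply (r : MvPolynomial σ k) (i : ℕ) :
      (DirectSum.decompose (homogeneousSubmodule σ k) r i : MvPolynomial σ k) =
        homogeneousComponent i r := decomposition.decompose'_apply r i
  have h := DirectSum.coe_decompose_mul_of_right_mem (homogeneousSubmodule σ k) n (a := p) hq
  rwa [decompose_apply, decompose_apply] at h

lemma homogeneousComponent_X_mul (a : σ) (p : MvPolynomial σ k) (n : ℕ) :
    homogeneousComponent (n + 1) (X a * p) = X a * homogeneousComponent n p := by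
  rw [mul_comm, homogeneousComponent_mul_of_isHomogeneous (isHomogeneous_X k a),
    if_pos (Nat.le_add_left 1 n), Nat.add_sub_cancel, mul_comm]

lemma eq_top_of_forall_exists_sub_X_mul_mem {M : AddSubgroup (MvPolynomial σ k)} {a : σ}
    (hM : ∀ p ∈ M, ∀ n, homogeneousComponent n p ∈ M) (hX : ∀ p ∈ M, X a * p ∈ M)
    (h : ∀ p, ∃ q, p - X a * q ∈ M) : M = ⊤ := by
  have hhom (n : ℕ) : ∀ p, p.IsHomogeneous n → p ∈ M := by
    induction n with
    | zero =>
      intro p hp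
      obtain ⟨q, hq⟩ := h p
      have hpq := hM _ hq 0
      rwa [map_sub, homogeneousComponent_eq_self hp, mul_comm,
        homogeneousComponent_mul_of_isHomogeneous (isHomogeneous_X k a), if_neg (by lia),
        sub_zero] at hpq
    | succ n ih =>
      intro p hp
      obtain ⟨q, hq⟩ := h p
      have hpq := hM _ hq (n + 1)
      rw [map_sub, homogeneousComponent_eq_self hp, homogeneousComponent_X_mul] at hpq
      simpa only [sub_add_cancel] using
        add_mem hpq (hX _ (ih _ (homogeneousComponent_isHomogeneous n q)))
  refine (AddSubgroup.eq_top_iff' M).2 fun p => ?_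
  rw [← sum_homogeneousComponent p]
  exact sum_mem fun n _ => hhom n _ (homogeneousComponent_isHomogeneous n p)

end GradedNakayama

section StraighteningLaw

open MvPolynomial Set

variable {k σ : Type*} [CommRing k] [PartialOrder σ]

/-- A polynomial is standard if each of its monomials is supported on a chain of variables. -/
def IsStandard (p : MvPolynomial σ k) : Prop :=
  ∀ m ∈ p.support, IsChain (· ≤ ·) (m.support : Set σ)

lemma IsStandard.restrictVars {p : MvPolynomial σ k} (hp : IsStandard p) (s : Set σ) :
    IsStandard (restrictVars s p) :=
  fun m hm => hp m (mem_support_restrictVars.1 hm).1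

lemma IsStandard.of_X_mul {a : σ} {p : MvPolynomial σ k} (h : IsStandard (X a * p)) :
    IsStandard p :=
  fun m hm => (h _ (single_add_mem_support_X_mul hm)).mono (support_subset_support_add_left _ m)

lemma exists_isLeast_of_isChain {s : Finset σ} (hs : s.Nonempty)
    (h : IsChain (· ≤ ·) (s : Set σ)) : ∃ a, IsLeast (s : Set σ) a := by
  obtain ⟨a, ha⟩ := s.exists_minimal hs
  exact ⟨a, ha.prop, fun b hb => (h.total ha.prop hb).elim id (ha.le_of_le hb)⟩

/-- A graded algebra `k[σ] ⧸ J` with straightening law on a poset `σ`, together with a family of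
primes `K v ⊇ J`, playing the role of the ideals of the Schubert varieties. The linear independence
of the standard monomials is not part of the data: it is forced by the primes `K v`. -/
structure StraighteningLaw (k σ : Type*) [CommRing k] [PartialOrder σ] where
  /-- The ideal of relations. -/
  J : Ideal (MvPolynomial σ k)
  /-- The prime ideal containing `J` and the variables not above `v`. -/
  K : σ → Ideal (MvPolynomial σ k)
  isPrime_K (v : σ) : (K v).IsPrime
  J_le_K (v : σ) : J ≤ K v
  X_mem_K {v u : σ} : ¬ v ≤ u → X u ∈ K v
  X_notMem_K (v : σ) : X v ∉ K v
  K_mono : Monotone K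
  constantCoeff_eq_zero {v : σ} {p : MvPolynomial σ k} : p ∈ K v → constantCoeff p = 0
  exists_isStandard_sub_mem (p : MvPolynomial σ k) : ∃ q, IsStandard q ∧ p - q ∈ J
  homogeneousComponent_mem_J {p : MvPolynomial σ k} :
    p ∈ J → ∀ n, homogeneousComponent n p ∈ J

namespace StraighteningLaw

variable (D : StraighteningLaw k σ)

lemma span_X_compl_Ici_le_K (v : σ) : Ideal.span (X '' (Ici v)ᶜ) ≤ D.K v := by
  rw [Ideal.span_le]
  rintro _ ⟨u, hu, rfl⟩
  exact D.X_mem_K hu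

lemma span_X_Ici_diff_le_K (v u : σ) : Ideal.span (X '' (Ici v \ Ici u)) ≤ D.K u :=
  (Ideal.span_mono (image_mono fun _ hy => hy.2)).trans (D.span_X_compl_Ici_le_K u)

lemma zero_notMem_support {v : σ} {p : MvPolynomial σ k} (hp : p ∈ D.K v) : 0 ∉ p.support :=
  notMem_support_iff.2 (D.constantCoeff_eq_zero hp)

lemma restrictVars_Ici_mem_K {v : σ} {p : MvPolynomial σ k} (hp : p ∈ D.K v) :
    restrictVars (Ici v) p ∈ D.K v := by
  simpa using Ideal.sub_mem _ hp (D.span_X_compl_Ici_le_K v (sub_restrictVars_mem_span _ p))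

lemma exists_isLeast_support {v : σ} {p : MvPolynomial σ k} (hp : IsStandard p) (hpK : p ∈ D.K v)
    {m : σ →₀ ℕ} (hm : m ∈ p.support) : ∃ a, IsLeast (m.support : Set σ) a := by
  refine exists_isLeast_of_isChain (Finsupp.support_nonempty_iff.2 ?_) (hp m hm)
  rintro rfl
  exact D.zero_notMem_support hpK hm

lemma X_dvd_of_forall_gt {v : σ}
    (ih : ∀ u > v, ∀ p, IsStandard p → p ∈ D.K u → restrictVars (Ici u) p = 0)
    {p : MvPolynomial σ k} (hp : IsStandard p) (hpK : p ∈ D.K v)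
    (habove : ∀ m ∈ p.support, ↑m.support ⊆ Ici v) : X v ∣ p := by
  refine X_dvd_of_forall_mem_support fun m hm => ?_
  by_contra hvm
  obtain ⟨u, hu, hmin⟩ := D.exists_isLeast_support hp hpK hm
  have hvu : v < u := lt_of_le_of_ne (habove m hm hu) fun h => hvm (h ▸ hu)
  have hm' : m ∈ (restrictVars (Ici u) p).support := mem_support_restrictVars.2 ⟨hm, hmin⟩
  simp [ih u hvu p hp (D.K_mono hvu.le hpK)] at hm'

lemma restrictVars_Ici_eq_zero [IsDomain k] [WellFoundedGT σ] {v : σ} {p : MvPolynomial σ k}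
    (hp : IsStandard p) (hpK : p ∈ D.K v) : restrictVars (Ici v) p = 0 := by
  induction v using WellFoundedGT.induction generalizing p with
  | ind v ihv =>
  suffices h : ∀ n, ∀ p : MvPolynomial σ k, p.totalDegree = n → IsStandard p → p ∈ D.K v →
      (∀ m ∈ p.support, ↑m.support ⊆ Ici v) → p = 0 from
    h _ _ rfl (hp.restrictVars _) (D.restrictVars_Ici_mem_K hpK)
      fun m hm => (mem_support_restrictVars.1 hm).2
  intro n
  induction n with
  | zero =>
    intro p hdeg _ hpK _
    rw [totalDegree_eq_zero_iff_eq_C.1 hdeg, ← constantCoeff_eq, D.constantCoeff_eq_zero hpK,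
      C_0]
  | succ n ihn =>
    intro p hdeg hp hpK habove
    obtain ⟨q, rfl⟩ := D.X_dvd_of_forall_gt (fun u hu p hp hpK => ihv u hu hp hpK) hp hpK habove
    have hq0 : q ≠ 0 := by
      rintro rfl
      simp at hdeg
    have hq : q = 0 := ihn q
      (by rw [totalDegree_mul_of_isDomain (X_ne_zero v) hq0, totalDegree_X] at hdeg; lia)
      hp.of_X_mul (((D.isPrime_K v).mem_or_mem hpK).resolve_left (D.X_notMem_K v))
      fun m hm => (support_subset_support_add_left _ m).trans
        (habove _ (single_add_mem_support_X_mul hm))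
    exact absurd hq hq0

lemma not_support_subset_Ici [IsDomain k] [WellFoundedGT σ] {v : σ} {p : MvPolynomial σ k}
    (hp : IsStandard p) (hpK : p ∈ D.K v) {m : σ →₀ ℕ} (hm : m ∈ p.support) :
    ¬ (m.support : Set σ) ⊆ Ici v := fun h => by
  have := mem_support_restrictVars.2 ⟨hm, h⟩
  simp [D.restrictVars_Ici_eq_zero hp hpK] at this

lemma K_eq_sup [IsDomain k] [WellFoundedGT σ] (v : σ) :
    D.K v = D.J ⊔ Ideal.span (X '' (Ici v)ᶜ) := by
  refine le_antisymm (fun p hp => ?_) (sup_le (D.J_le_K v) (D.span_X_compl_Ici_le_K v))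
  obtain ⟨q, hq, hpq⟩ := D.exists_isStandard_sub_mem p
  have hqK : q ∈ D.K v := by simpa using Ideal.sub_mem _ hp (D.J_le_K v hpq)
  have hqZ := sub_restrictVars_mem_span (Ici v) q
  rw [D.restrictVars_Ici_eq_zero hq hqK, sub_zero] at hqZ
  simpa using Submodule.add_mem_sup hpq hqZ

lemma homogeneousComponent_mem_K [IsDomain k] [WellFoundedGT σ] {v : σ} {p : MvPolynomial σ k}
    (hp : p ∈ D.K v) (n : ℕ) : homogeneousComponent n p ∈ D.K v := by
  rw [K_eq_sup] at hp ⊢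
  obtain ⟨a, ha, b, hb, rfl⟩ := Submodule.mem_sup.1 hp
  rw [map_add]
  refine Submodule.add_mem_sup (D.homogeneousComponent_mem_J ha n) ?_
  rw [mem_ideal_span_X_image] at hb ⊢
  intro m hm
  rw [support_homogeneousComponent] at hm
  exact hb m (Finset.mem_filter.1 hm).1

lemma exists_sub_X_mul_mem {v : σ} {p : MvPolynomial σ k} {s : Set σ} (hs : Ici v ⊆ insert v s)
    (hp : restrictVars s p = 0) : ∃ q, p - X v * q ∈ Ideal.span (X '' (Ici v)ᶜ) := by
  have hmem : p ∈ Ideal.span {X v} ⊔ Ideal.span (X '' (Ici v)ᶜ) := by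
    rw [← image_singleton, ← Ideal.span_union, ← image_union, ← sub_zero p, ← hp]
    refine Ideal.span_mono (image_mono fun a ha => ?_) (sub_restrictVars_mem_span s p)
    by_cases hva : a ∈ Ici v
    · exact .inl ((hs hva).resolve_right ha)
    · exact .inr hva
  obtain ⟨_, hq, b, hb, rfl⟩ := Submodule.mem_sup.1 hmem
  obtain ⟨q, rfl⟩ := Ideal.mem_span_singleton.1 hq
  exact ⟨q, by simpa using hb⟩

lemma exists_sub_X_mul_mem_K [IsDomain k] [WellFoundedGT σ] {v v' v'' : σ} (h' : v < v')
    (h'' : v < v'') (hcover : ∀ u, v < u → v' ≤ u ∨ v'' ≤ u) {p : MvPolynomial σ k}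
    (hp' : p ∈ D.K v') (hp'' : p ∈ D.K v'') : ∃ q, p - X v * q ∈ D.K v := by
  obtain ⟨q, hq, hpq⟩ := D.exists_isStandard_sub_mem p
  have hrest : ∀ w, v < w → p ∈ D.K w → restrictVars (Ioi v) q ∈ D.K w := fun w hw hp => by
    have hqw : q ∈ D.K w := by simpa using Ideal.sub_mem _ hp (D.J_le_K w hpq)
    have hspan : Ideal.span (X '' (Ioi v)ᶜ) ≤ D.K w := by
      rw [Ideal.span_le]
      rintro _ ⟨u, hu, rfl⟩
      exact D.X_mem_K fun h => hu (hw.trans_le h)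
    simpa using Ideal.sub_mem _ hqw (hspan (sub_restrictVars_mem_span (Ioi v) q))
  have hzero : restrictVars (Ioi v) q = 0 := by
    refine support_eq_empty.1 (Finset.eq_empty_of_forall_notMem fun m hm => ?_)
    have hstd := hq.restrictVars (Ioi v)
    obtain ⟨u, hu, hmin⟩ := D.exists_isLeast_support hstd (hrest v' h' hp') hm
    have hvu : v < u := (mem_support_restrictVars.1 hm).2 hu
    rcases hcover u hvu with hle | hle
    · exact D.not_support_subset_Ici hstd (hrest v' h' hp') hm fun a ha => hle.trans (hmin ha)
    · exact D.not_support_subset_Ici hstd (hrest v'' h'' hp'') hm fun a ha => hle.trans (hmin ha)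
  obtain ⟨q', hq'⟩ := exists_sub_X_mul_mem (s := Ioi v) (Ioi_insert.symm.subset) hzero
  refine ⟨q', ?_⟩
  simpa using Ideal.add_mem _ (D.J_le_K v hpq) (D.span_X_compl_Ici_le_K v hq')

end StraighteningLaw
end StraighteningLaw

section WonderfulRanking

open MvPolynomial Set

/-- A rank function on a bounded poset, with a preferred cover `next v` of every non-maximal `v`.
There is at most one further cover `v'` of `v`, and then `next v'` is the join of both. -/
structure WonderfulRanking (σ ι : Type*) [PartialOrder σ] [LinearOrder ι] where
  rank : σ → ι
  rank_strictMono : StrictMono rank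
  bot : σ
  top : σ
  isBot_bot : IsBot bot
  isTop_top : IsTop top
  isBot_rank_bot : IsBot (rank bot)
  isTop_rank_top : IsTop (rank top)
  next : σ → σ
  lt_next {v : σ} : v ≠ top → v < next v
  rank_next {v : σ} : v ≠ top → rank v ⋖ rank (next v)
  cover {v : σ} : v ≠ top → (∀ u, v < u → next v ≤ u) ∨
    ∃ v', v < v' ∧ v' ≠ next v ∧ rank v' = rank (next v) ∧
      (∀ u, v < u → v' ≤ u ∨ next v ≤ u) ∧ IsLUB {v', next v} (next v')

namespace WonderfulRanking

variable {k σ ι κ κ' : Type*} [CommRing k] [PartialOrder σ] [LinearOrder ι]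
  (r : WonderfulRanking σ ι)

lemma Ici_rank_next {v : σ} (hv : v ≠ r.top) : Ici (r.rank (r.next v)) = Ioi (r.rank v) :=
  (r.rank_next hv).Ioi_eq.symm

lemma ne_top_of_rank_eq_rank_next {v v' : σ} (hne : v' ≠ r.next v)
    (hrank : r.rank v' = r.rank (r.next v)) : v' ≠ r.top := by
  rintro rfl
  exact (r.rank_strictMono (lt_of_le_of_ne (r.isTop_top _) hne.symm)).ne' hrank

lemma K_bot [IsDomain k] [WellFoundedGT σ] (D : StraighteningLaw k σ) : D.K r.bot = D.J := by
  have hIci : Ici r.bot = univ := eq_univ_of_forall r.isBot_bot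
  simp [D.K_eq_sup, hIci]

variable [Fintype σ] [Fintype κ] [Fintype κ']

open Classical in
/-- The homomorphism from the polynomial ring in the parameters `θ i = ∑_{rank u = i} X u`. -/
def theta : MvPolynomial ι k →ₐ[k] MvPolynomial σ k :=
  aeval fun i => ∑ u with r.rank u = i, X u

open Classical in
@[simp]
lemma theta_X (i : ι) : r.theta (X i : MvPolynomial ι k) = ∑ u with r.rank u = i, X u :=
  aeval_X _ i

lemma theta_isHomogeneous {p : MvPolynomial ι k} {n : ℕ} (hp : p.IsHomogeneous n) :
    (r.theta p).IsHomogeneous n := by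
  classical
  have h := hp.aeval (fun i => (∑ u with r.rank u = i, X u : MvPolynomial σ k)) (n := 1)
    fun i => IsHomogeneous.sum _ _ _ fun u _ => isHomogeneous_X _ _
  rw [one_mul] at h
  unfold theta
  convert h

lemma homogeneousComponent_theta (p : MvPolynomial ι k) (n : ℕ) :
    homogeneousComponent n (r.theta p) = r.theta (homogeneousComponent n p) := by
  conv_lhs => rw [← sum_homogeneousComponent p, map_sum, map_sum]
  have hcomp (i : ℕ) : homogeneousComponent n (r.theta (homogeneousComponent i p)) =
      if n = i then r.theta (homogeneousComponent i p) else 0 :=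
    homogeneousComponent_of_mem (r.theta_isHomogeneous (homogeneousComponent_isHomogeneous i p))
  simp only [hcomp, Finset.sum_ite_eq, Finset.mem_range]
  split_ifs with hn
  · rfl
  · rw [homogeneousComponent_eq_zero _ _ (by lia), map_zero]

lemma constantCoeff_theta (p : MvPolynomial ι k) :
    constantCoeff (r.theta p) = constantCoeff p := by
  have : (constantCoeff.comp (r.theta (k := k)).toRingHom) = constantCoeff :=
    ringHom_ext (fun c => by simp) fun i => by simp
  exact DFunLike.congr_fun this p

/-- The combination `∑ θ(s i) b i` of the polynomials `b i` with coefficients in the ring of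
parameters. -/
def linComb (b : κ → MvPolynomial σ k) : (κ → MvPolynomial ι k) →+ MvPolynomial σ k where
  toFun s := ∑ i, r.theta (s i) * b i
  map_zero' := by simp
  map_add' s t := by simp [add_mul, Finset.sum_add_distrib]

lemma linComb_apply (b : κ → MvPolynomial σ k) (s : κ → MvPolynomial ι k) :
    r.linComb b s = ∑ i, r.theta (s i) * b i :=
  rfl

lemma linComb_smul (b : κ → MvPolynomial σ k) (p : MvPolynomial ι k) (s : κ → MvPolynomial ι k) :
    r.linComb b (p • s) = r.theta p * r.linComb b s := by
  simp [linComb_apply, Finset.mul_sum, mul_assoc]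

lemma linComb_mul_left (b : κ → MvPolynomial σ k) (x : MvPolynomial σ k)
    (s : κ → MvPolynomial ι k) : r.linComb (fun i => x * b i) s = x * r.linComb b s := by
  simp only [linComb_apply, Finset.mul_sum, mul_left_comm]

lemma linComb_sumElim (b : κ → MvPolynomial σ k) (c : κ' → MvPolynomial σ k)
    (s : κ ⊕ κ' → MvPolynomial ι k) :
    r.linComb (Sum.elim b c) s = r.linComb b (s ∘ Sum.inl) + r.linComb c (s ∘ Sum.inr) := by
  simp [linComb_apply]

lemma linComb_mem {b : κ → MvPolynomial σ k} {I : Ideal (MvPolynomial σ k)} (hb : ∀ i, b i ∈ I)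
    (s : κ → MvPolynomial ι k) : r.linComb b s ∈ I :=
  Ideal.sum_mem _ fun i _ => Ideal.mul_mem_left _ _ (hb i)

lemma exists_linComb_eq_homogeneousComponent {b : κ → MvPolynomial σ k}
    (hb : ∀ i, ∃ d, (b i).IsHomogeneous d) (s : κ → MvPolynomial ι k) (n : ℕ) :
    ∃ s', r.linComb b s' = homogeneousComponent n (r.linComb b s) := by
  choose d hd using hb
  refine ⟨fun i => if d i ≤ n then homogeneousComponent (n - d i) (s i) else 0, ?_⟩
  simp only [linComb_apply, map_sum]
  refine Finset.sum_congr rfl fun i _ => ?_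
  rw [homogeneousComponent_mul_of_isHomogeneous (hd i), homogeneousComponent_theta]
  split_ifs <;> simp

variable (D : StraighteningLaw k σ) {v : σ}

lemma theta_sub_theta_restrictVars_mem {s : Set ι} (hs : Ici (r.rank v) ⊆ s)
    (p : MvPolynomial ι k) : r.theta p - r.theta (restrictVars s p) ∈ D.K v := by
  classical
  refine sub_mem_of_forall_X_sub_mem r.theta (r.theta.comp (restrictVars s)) (fun i => ?_) p
  rw [AlgHom.comp_apply]
  by_cases hi : i ∈ s
  · simp [restrictVars_X_of_mem hi]
  · rw [restrictVars_X_of_notMem hi, map_zero, sub_zero, theta_X]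
    refine Ideal.sum_mem _ fun u hu => D.X_mem_K fun hvu => hi (hs ?_)
    obtain rfl := (Finset.mem_filter.1 hu).2
    exact r.rank_strictMono.monotone hvu

lemma theta_X_rank_sub_X_mem (v : σ) : r.theta (X (r.rank v)) - X v ∈ D.K v := by
  classical
  rw [theta_X, ← Finset.sum_erase_add _ _ (a := v) (by simp), add_sub_cancel_right]
  refine Ideal.sum_mem _ fun u hu => D.X_mem_K fun hvu => ?_
  simp only [Finset.mem_erase, Finset.mem_filter] at hu
  exact (r.rank_strictMono (lt_of_le_of_ne hvu (Ne.symm hu.1))).ne' hu.2.2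

lemma linComb_sub_linComb_restrictVars_mem {s : Set ι} (hs : Ici (r.rank v) ⊆ s)
    (b : κ → MvPolynomial σ k) (t : κ → MvPolynomial ι k) :
    r.linComb b t - r.linComb b (fun i => restrictVars s (t i)) ∈ D.K v := by
  rw [linComb_apply, linComb_apply, ← Finset.sum_sub_distrib]
  refine Ideal.sum_mem _ fun i _ => ?_
  rw [← sub_mul]
  exact Ideal.mul_mem_right _ _ (r.theta_sub_theta_restrictVars_mem D hs _)

lemma X_mul_linComb_sub_mem (b : κ → MvPolynomial σ k) (s : κ → MvPolynomial ι k) :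
    X v * r.linComb b s - r.linComb b ((X (r.rank v) : MvPolynomial ι k) • s) ∈ D.K v := by
  rw [linComb_smul, ← sub_mul, ← neg_sub (r.theta _)]
  exact Ideal.mul_mem_right _ _ (neg_mem (r.theta_X_rank_sub_X_mem D v))

lemma X_dvd_restrictVars_Ici {p : MvPolynomial ι k} {i : ι} (hp : restrictVars (Ioi i) p = 0) :
    X i ∣ restrictVars (Ici i) p := by
  have h := X_dvd_restrictVars_sub Ioi_insert.symm.subset (Ioi_subset_Ici_self (a := i)) p
  rwa [hp, sub_zero] at h

lemma exists_linComb_sub_X_mul_mem (b : κ → MvPolynomial σ k) {s : κ → MvPolynomial ι k}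
    (hs : ∀ i, restrictVars (Ioi (r.rank v)) (s i) = 0) :
    ∃ t : κ → MvPolynomial ι k,
      (∀ i, restrictVars (Ici (r.rank v)) (s i) = X (r.rank v) * t i) ∧
        r.linComb b s - X v * r.linComb b t ∈ D.K v := by
  choose t ht using fun i => X_dvd_restrictVars_Ici (hs i)
  refine ⟨t, ht, ?_⟩
  have h := r.linComb_sub_linComb_restrictVars_mem D (subset_refl (Ici (r.rank v))) b s
  rw [funext ht] at h
  simpa [Pi.smul_def] using Ideal.sub_mem _ h (r.X_mul_linComb_sub_mem D b t)

/-- Homogeneous polynomials inducing a basis of `k[σ] ⧸ K v` over the polynomial ring in the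
parameters `θ i` with `rank v ≤ i`. -/
structure IsBasisModK (v : σ) (b : κ → MvPolynomial σ k) : Prop where
  isHomogeneous (i : κ) : ∃ d, (b i).IsHomogeneous d
  exists_sub_linComb_mem (p : MvPolynomial σ k) : ∃ s, p - r.linComb b s ∈ D.K v
  restrictVars_eq_zero {s : κ → MvPolynomial ι k} :
    r.linComb b s ∈ D.K v → ∀ i, restrictVars (Ici (r.rank v)) (s i) = 0

variable {b : κ → MvPolynomial σ k} {c : κ' → MvPolynomial σ k}

lemma exists_sub_linComb_mem [IsDomain k] (hb : ∀ i, ∃ d, (b i).IsHomogeneous d)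
    (h : ∀ p, ∃ s q, p - r.linComb b s - X v * q ∈ D.K v) (p : MvPolynomial σ k) :
    ∃ s, p - r.linComb b s ∈ D.K v := by
  let M : AddSubgroup (MvPolynomial σ k) := (r.linComb b).range ⊔ (D.K v).toAddSubgroup
  have mem_M {p} : p ∈ M ↔ ∃ s, p - r.linComb b s ∈ D.K v := by
    simp only [M, AddSubgroup.mem_sup, AddMonoidHom.mem_range, exists_exists_eq_and]
    refine exists_congr fun s => ⟨?_, fun hs => ⟨_, hs, add_sub_cancel _ _⟩⟩
    rintro ⟨x, hx, rfl⟩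
    simpa using hx
  rw [← mem_M, eq_top_of_forall_exists_sub_X_mul_mem (M := M) (a := v)]
  · exact AddSubgroup.mem_top p
  · intro p hp n
    obtain ⟨s, hs⟩ := mem_M.1 hp
    obtain ⟨s', hs'⟩ := r.exists_linComb_eq_homogeneousComponent hb s n
    exact mem_M.2 ⟨s', by rw [hs', ← map_sub]; exact D.homogeneousComponent_mem_K hs n⟩
  · intro p hp
    obtain ⟨s, hs⟩ := mem_M.1 hp
    refine mem_M.2 ⟨(X (r.rank v) : MvPolynomial ι k) • s, ?_⟩
    simpa [mul_sub] using
      Ideal.add_mem _ (Ideal.mul_mem_left _ (X v) hs) (r.X_mul_linComb_sub_mem D b s)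
  · intro p
    obtain ⟨s, q, hq⟩ := h p
    exact ⟨q, mem_M.2 ⟨s, by rwa [sub_right_comm]⟩⟩

lemma X_pow_dvd_restrictVars
    (h : ∀ s, r.linComb b s ∈ D.K v → ∀ i, restrictVars (Ioi (r.rank v)) (s i) = 0) (n : ℕ)
    {s : κ → MvPolynomial ι k} (hs : r.linComb b s ∈ D.K v) (i : κ) :
    X (r.rank v) ^ n ∣ restrictVars (Ici (r.rank v)) (s i) := by
  induction n generalizing s i with
  | zero => simp
  | succ n ih =>
    obtain ⟨t, ht, hst⟩ := r.exists_linComb_sub_X_mul_mem D b (h s hs)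
    have hXt : X v * r.linComb b t ∈ D.K v := by simpa using Ideal.sub_mem _ hs hst
    have ht_mem := ((D.isPrime_K v).mem_or_mem hXt).resolve_left (D.X_notMem_K v)
    rw [← restrictVars_restrictVars, ht, map_mul, restrictVars_X_of_mem self_mem_Ici, pow_succ']
    exact mul_dvd_mul_left _ (ih ht_mem i)

lemma restrictVars_Ici_eq_zero_of_Ioi [IsDomain k]
    (h : ∀ s, r.linComb b s ∈ D.K v → ∀ i, restrictVars (Ioi (r.rank v)) (s i) = 0)
    {s : κ → MvPolynomial ι k} (hs : r.linComb b s ∈ D.K v) (i : κ) :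
    restrictVars (Ici (r.rank v)) (s i) = 0 :=
  eq_zero_of_forall_X_pow_dvd fun n => r.X_pow_dvd_restrictVars D h n hs i

/-- A basis of `k[σ] ⧸ K v` extending a basis of `k[σ] ⧸ K (next v)` by elements of the ideal
generated by the variables that vanish in the latter but not in the former. -/
structure IsAdaptedBasis (v : σ) (b : κ → MvPolynomial σ k) (c : κ' → MvPolynomial σ k) :
    Prop where
  isBasisModK : r.IsBasisModK D v (Sum.elim b c)
  isBasisModK_next : r.IsBasisModK D (r.next v) b
  mem_span (i : κ') : c i ∈ Ideal.span (X '' (Ici v \ Ici (r.next v)))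

variable {r D}

lemma IsBasisModK.sumElim_of_isEmpty [IsEmpty κ'] (hb : r.IsBasisModK D v b) :
    r.IsBasisModK D v (Sum.elim b c) where
  isHomogeneous := Sum.rec hb.isHomogeneous isEmptyElim
  exists_sub_linComb_mem p := by
    obtain ⟨s, hs⟩ := hb.exists_sub_linComb_mem p
    refine ⟨Sum.elim s isEmptyElim, ?_⟩
    simpa [linComb_sumElim, linComb_apply _ c] using hs
  restrictVars_eq_zero hs := by
    rw [linComb_sumElim, linComb_apply _ c, Finset.univ_eq_empty, Finset.sum_empty, add_zero] at hs
    exact Sum.rec (hb.restrictVars_eq_zero hs) isEmptyElim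

end WonderfulRanking
end WonderfulRanking

section BasisModK

open MvPolynomial Set

namespace WonderfulRanking

variable {k σ ι κ κ' μ : Type*} [CommRing k] [IsDomain k] [Fintype σ] [PartialOrder σ]
  [LinearOrder ι] [Fintype κ] [Fintype κ'] [Fintype μ] (r : WonderfulRanking σ ι)
  (D : StraighteningLaw k σ) {v v' : σ} {b : κ → MvPolynomial σ k} {c : κ' → MvPolynomial σ k}
  {e : μ → MvPolynomial σ k}

lemma isBasisModK_of_modulo_X (hb : ∀ i, ∃ d, (b i).IsHomogeneous d)
    (hspan : ∀ p, ∃ s q, p - r.linComb b s - X v * q ∈ D.K v)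
    (hind : ∀ s, r.linComb b s ∈ D.K v → ∀ i, restrictVars (Ioi (r.rank v)) (s i) = 0) :
    r.IsBasisModK D v b where
  isHomogeneous := hb
  exists_sub_linComb_mem := r.exists_sub_linComb_mem D hb hspan
  restrictVars_eq_zero hs := r.restrictVars_Ici_eq_zero_of_Ioi D hind hs

lemma isBasisModK_top : r.IsBasisModK D r.top fun _ : Unit => 1 := by
  refine r.isBasisModK_of_modulo_X D (fun _ => ⟨0, isHomogeneous_one _ _⟩) (fun p => ?_)
    fun s hs i => ?_
  · have hIci : Ici r.top ⊆ insert r.top ∅ := fun u hu =>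
      .inl (le_antisymm (r.isTop_top u) hu)
    obtain ⟨q, hq⟩ := StraighteningLaw.exists_sub_X_mul_mem hIci
      (p := p - C (constantCoeff p)) (by simp [restrictVars_empty])
    refine ⟨fun _ => C (constantCoeff p), q, ?_⟩
    simpa [linComb_apply] using D.span_X_compl_Ici_le_K _ hq
  · have hIoi : Ioi (r.rank r.top) = ∅ := Ioi_eq_empty_iff.2 r.isTop_rank_top.isMax
    have hs0 : constantCoeff (s i) = 0 := by
      rw [← r.constantCoeff_theta]
      exact D.constantCoeff_eq_zero (by simpa [linComb_apply] using hs)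
    simp [hIoi, restrictVars_empty, hs0]

variable {r D}

lemma IsBasisModK.of_next (hv : v ≠ r.top) (hcover : ∀ u, v < u → r.next v ≤ u)
    (hb : r.IsBasisModK D (r.next v) b) : r.IsBasisModK D v b := by
  refine r.isBasisModK_of_modulo_X D hb.isHomogeneous (fun p => ?_) fun s hs => ?_
  · obtain ⟨s, hs⟩ := hb.exists_sub_linComb_mem p
    obtain ⟨q, hq⟩ := D.exists_sub_X_mul_mem_K (r.lt_next hv) (r.lt_next hv)
      (fun u hu => .inl (hcover u hu)) hs hs
    exact ⟨s, q, hq⟩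
  · rw [← r.Ici_rank_next hv]
    exact hb.restrictVars_eq_zero (D.K_mono (r.lt_next hv).le hs)

lemma exists_sub_linComb_sub_X_mul_mem (hv : v ≠ r.top) (hv' : v' ≠ r.top) (hlt : v < v')
    (hcover : ∀ u, v < u → v' ≤ u ∨ r.next v ≤ u) (hle : r.next v ≤ r.next v')
    (hmem : X v' ∈ D.K (r.next v)) (he_mem : ∀ i, e i ∈ D.K (r.next v))
    (hb : r.IsBasisModK D (r.next v) b) (hc : r.IsAdaptedBasis D v' c e) (p : MvPolynomial σ k) :
    ∃ s q, p - r.linComb (Sum.elim b (Sum.elim (fun i => X v' * c i) e)) s - X v * q ∈ D.K v := by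
  obtain ⟨s, hs⟩ := hb.exists_sub_linComb_mem p
  obtain ⟨t, ht⟩ := hc.isBasisModK.exists_sub_linComb_mem (p - r.linComb b s)
  rw [linComb_sumElim] at ht
  have he := r.linComb_mem he_mem (t ∘ Sum.inr)
  have hct : r.linComb c (t ∘ Sum.inl) ∈ D.K (r.next v') := by
    have h₁ := D.K_mono (r.lt_next hv').le ht
    have h₂ := D.K_mono hle (Ideal.sub_mem _ hs he)
    convert Ideal.sub_mem _ h₂ h₁ using 1
    ring
  have hct' := hc.isBasisModK_next.restrictVars_eq_zero hct
  rw [r.Ici_rank_next hv'] at hct'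
  obtain ⟨w, -, hw⟩ := r.exists_linComb_sub_X_mul_mem D c hct'
  have hsub' : p - r.linComb b s - (X v' * r.linComb c w + r.linComb e (t ∘ Sum.inr)) ∈
      D.K v' := by
    convert Ideal.add_mem _ ht hw using 1
    ring
  have hsub : p - r.linComb b s - (X v' * r.linComb c w + r.linComb e (t ∘ Sum.inr)) ∈
      D.K (r.next v) :=
    Ideal.sub_mem _ hs (Ideal.add_mem _ (Ideal.mul_mem_right _ _ hmem) he)
  obtain ⟨q, hq⟩ := D.exists_sub_X_mul_mem_K hlt (r.lt_next hv) hcover hsub' hsub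
  refine ⟨Sum.elim s (Sum.elim w (t ∘ Sum.inr)), q, ?_⟩
  simpa [linComb_sumElim, linComb_mul_left, sub_sub] using hq

lemma restrictVars_eq_zero_of_linComb_sumElim_mem (hv : v ≠ r.top) (hlt : v < v')
    (hrank : r.rank v' = r.rank (r.next v)) (hmem : X v' ∈ D.K (r.next v))
    (he_mem : ∀ i, e i ∈ D.K (r.next v)) (hb : r.IsBasisModK D (r.next v) b)
    (hc : r.IsBasisModK D v' (Sum.elim c e)) {s : κ ⊕ κ' ⊕ μ → MvPolynomial ι k}
    (hs : r.linComb (Sum.elim b (Sum.elim (fun i => X v' * c i) e)) s ∈ D.K v) (i : κ ⊕ κ' ⊕ μ) :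
    restrictVars (Ioi (r.rank v)) (s i) = 0 := by
  rw [← r.Ici_rank_next hv]
  rw [linComb_sumElim, linComb_sumElim, linComb_mul_left] at hs
  set t := (s ∘ Sum.inr) ∘ Sum.inl
  set w := (s ∘ Sum.inr) ∘ Sum.inr
  have hb_mem : r.linComb b (s ∘ Sum.inl) ∈ D.K (r.next v) :=
    (Ideal.add_mem_iff_left _ (Ideal.add_mem _ (Ideal.mul_mem_right _ _ hmem)
      (r.linComb_mem he_mem w))).1 (D.K_mono (r.lt_next hv).le hs)
  have hb_zero := hb.restrictVars_eq_zero hb_mem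
  have hb_mem' : r.linComb b (s ∘ Sum.inl) ∈ D.K v' := by
    have h := r.linComb_sub_linComb_restrictVars_mem D (Ici_subset_Ici.2 hrank.symm.le) b
      (s ∘ Sum.inl)
    simp only [hb_zero] at h
    simpa [linComb_apply] using h
  have hc_mem : r.linComb (Sum.elim c e)
      (Sum.elim ((X (r.rank v') : MvPolynomial ι k) • t) w) ∈ D.K v' := by
    have h₁ := (Ideal.add_mem_iff_right _ hb_mem').1 (D.K_mono hlt.le hs)
    have h₂ := Ideal.sub_mem _ h₁ (r.X_mul_linComb_sub_mem D c t)
    rw [linComb_sumElim, Sum.elim_comp_inl, Sum.elim_comp_inr]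
    convert h₂ using 1
    ring
  have hc_zero := hc.restrictVars_eq_zero hc_mem
  rw [hrank] at hc_zero
  rcases i with i | i | i
  · exact hb_zero i
  · have h : restrictVars (Ici (r.rank (r.next v))) (X (r.rank (r.next v)) * t i) = 0 := by
      simpa [hrank] using hc_zero (Sum.inl i)
    rw [map_mul, restrictVars_X_of_mem self_mem_Ici] at h
    exact (mul_eq_zero.1 h).resolve_left (X_ne_zero _)
  · exact hc_zero (Sum.inr i)

lemma IsAdaptedBasis.of_cover (hv : v ≠ r.top) (hv' : v' ≠ r.top) (hlt : v < v')
    (hne : v' ≠ r.next v) (hrank : r.rank v' = r.rank (r.next v))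
    (hcover : ∀ u, v < u → v' ≤ u ∨ r.next v ≤ u) (hlub : IsLUB {v', r.next v} (r.next v'))
    (hb : r.IsBasisModK D (r.next v) b) (hc : r.IsAdaptedBasis D v' c e) :
    r.IsAdaptedBasis D v b (Sum.elim (fun i => X v' * c i) e) := by
  have hnle : ¬ r.next v ≤ v' := fun h =>
    (r.rank_strictMono (lt_of_le_of_ne h hne.symm)).ne' hrank
  have hspan (i : κ' ⊕ μ) : Sum.elim (fun i => X v' * c i) e i ∈
      Ideal.span (X '' (Ici v \ Ici (r.next v))) := by
    rcases i with i | i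
    · exact Ideal.mul_mem_right _ _ (Ideal.subset_span ⟨v', ⟨hlt.le, hnle⟩, rfl⟩)
    · refine Ideal.span_mono (image_mono fun y hy => ?_) (hc.mem_span i)
      exact ⟨hlt.le.trans hy.1, fun h => hy.2 (hlub.2 (by simpa using ⟨hy.1, h⟩))⟩
  have he_mem (i : μ) : e i ∈ D.K (r.next v) := D.span_X_Ici_diff_le_K _ _ (hspan (Sum.inr i))
  have hhom (i : κ ⊕ κ' ⊕ μ) :
      ∃ d, (Sum.elim b (Sum.elim (fun i => X v' * c i) e) i).IsHomogeneous d := by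
    rcases i with i | i | i
    · exact hb.isHomogeneous i
    · obtain ⟨d, hd⟩ := hc.isBasisModK_next.isHomogeneous i
      exact ⟨1 + d, (isHomogeneous_X _ _).mul hd⟩
    · exact hc.isBasisModK.isHomogeneous (Sum.inr i)
  refine ⟨r.isBasisModK_of_modulo_X D hhom ?_ fun s hs => ?_, hb, hspan⟩
  · exact exists_sub_linComb_sub_X_mul_mem hv hv' hlt hcover (hlub.1 (by simp))
      (D.X_mem_K hnle) he_mem hb hc
  · exact restrictVars_eq_zero_of_linComb_sumElim_mem hv hlt hrank (D.X_mem_K hnle) he_mem hb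
      hc.isBasisModK hs

variable (r D)

lemma exists_isAdaptedBasis (v : σ) : v ≠ r.top →
    ∃ (κ κ' : Type) (_ : Fintype κ) (_ : Fintype κ') (b : κ → MvPolynomial σ k)
      (c : κ' → MvPolynomial σ k), r.IsAdaptedBasis D v b c := by
  induction v using WellFoundedGT.induction with
  | ind v ih =>
  intro hv
  obtain ⟨κ, _, b, hb⟩ : ∃ (κ : Type) (_ : Fintype κ) (b : κ → MvPolynomial σ k),
      r.IsBasisModK D (r.next v) b := by
    by_cases htop : r.next v = r.top
    · exact ⟨Unit, inferInstance, _, htop ▸ r.isBasisModK_top D⟩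
    · obtain ⟨κ, κ', _, _, b, c, h⟩ := ih _ (r.lt_next hv) htop
      exact ⟨κ ⊕ κ', inferInstance, _, h.isBasisModK⟩
  rcases r.cover hv with hcover | ⟨v', hlt, hne, hrank, hcover, hlub⟩
  · exact ⟨κ, Empty, inferInstance, inferInstance, b, Empty.elim,
      (hb.of_next hv hcover).sumElim_of_isEmpty, hb, fun i => i.elim⟩
  · have hv' := r.ne_top_of_rank_eq_rank_next hne hrank
    obtain ⟨κ', μ, _, _, c, e, hc⟩ := ih v' hlt hv'
    exact ⟨κ, κ' ⊕ μ, inferInstance, inferInstance, _, _,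
      hc.of_cover hv hv' hlt hne hrank hcover hlub hb⟩

lemma exists_isBasisModK (v : σ) :
    ∃ (κ : Type) (_ : Fintype κ) (b : κ → MvPolynomial σ k), r.IsBasisModK D v b := by
  by_cases hv : v = r.top
  · exact ⟨Unit, inferInstance, _, hv ▸ r.isBasisModK_top D⟩
  · obtain ⟨κ, κ', _, _, b, c, h⟩ := r.exists_isAdaptedBasis D v hv
    exact ⟨κ ⊕ κ', inferInstance, _, h.isBasisModK⟩

/-- The algebra `k[σ] ⧸ J` over the ring of parameters `θ`. -/
abbrev quotientAlgebra : Algebra (MvPolynomial ι k) (MvPolynomial σ k ⧸ D.J) :=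
  ((Ideal.Quotient.mk D.J).comp r.theta.toRingHom).toAlgebra

lemma exists_basis_quotient : letI := r.quotientAlgebra D
    ∃ (κ : Type) (_ : Fintype κ),
      Nonempty (Module.Basis κ (MvPolynomial ι k) (MvPolynomial σ k ⧸ D.J)) := by
  let := r.quotientAlgebra D
  let : Module (MvPolynomial ι k) (MvPolynomial σ k ⧸ D.J) := Algebra.toModule
  obtain ⟨κ, _, b, hb⟩ := r.exists_isBasisModK D r.bot
  have hsum (s : κ → MvPolynomial ι k) :
      ∑ i, s i • Ideal.Quotient.mk D.J (b i) = Ideal.Quotient.mk D.J (r.linComb b s) := by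
    rw [linComb_apply, map_sum]
    refine Finset.sum_congr rfl fun i _ => ?_
    rw [Algebra.smul_def, map_mul]
    rfl
  have hli : LinearIndependent (MvPolynomial ι k) fun i => Ideal.Quotient.mk D.J (b i) := by
    rw [Fintype.linearIndependent_iff]
    intro s hs i
    rw [hsum, Ideal.Quotient.eq_zero_iff_mem, ← r.K_bot] at hs
    have h := hb.restrictVars_eq_zero hs i
    have hIci : Ici (r.rank r.bot) = univ := eq_univ_of_forall r.isBot_rank_bot
    rwa [hIci, restrictVars_univ] at h
  have hspan : ⊤ ≤ Submodule.span (MvPolynomial ι k)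
      (range fun i => Ideal.Quotient.mk D.J (b i)) := by
    intro x _
    obtain ⟨p, rfl⟩ := Ideal.Quotient.mk_surjective x
    obtain ⟨s, hs⟩ := hb.exists_sub_linComb_mem p
    rw [K_bot] at hs
    rw [(Ideal.Quotient.mk_eq_mk_iff_sub_mem _ _).2 hs, ← hsum]
    exact Submodule.sum_mem _ fun i _ => Submodule.smul_mem _ _ (Submodule.subset_span ⟨i, rfl⟩)
  exact ⟨κ, inferInstance, ⟨Module.Basis.mk hli hspan⟩⟩

end WonderfulRanking
end BasisModK

/-! ### The poset of variables -/

/-- The variables `x i j` and `t k`, with the partial order for which the products of comparable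
variables span `𝓡 ⧸ J`. It is a synonym, since `Var f` already carries the order of a disjoint
sum. -/
def PosetVar (f : ℕ) : Type :=
  Var f

namespace PosetVar

variable {f : ℕ}

instance : Fintype (PosetVar f) :=
  inferInstanceAs (Fintype (Var f))

/-- The matrix variable in row `i` and column `j`. -/
def x (i j : ℕ) (hij : i < j) (hj : j < f) : PosetVar f :=
  Sum.inl ⟨(⟨i, hij.trans hj⟩, ⟨j, hj⟩), hij⟩

/-- The `k`-th entry of the row vector. -/
def t (k : ℕ) (hk : k < f) : PosetVar f :=
  Sum.inr ⟨k, hk⟩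

variable {i j k l : ℕ} {hij : i < j} {hj : j < f} {hk : k < f} {hkl : k < l} {hl : l < f}

@[elab_as_elim]
lemma casesXT {C : PosetVar f → Prop} (v : PosetVar f) (x : ∀ i j hij hj, C (x i j hij hj))
    (t : ∀ k hk, C (t k hk)) : C v := by
  rcases v with ⟨⟨⟨i, hi⟩, ⟨j, hj⟩⟩, hij⟩ | ⟨k, hk⟩
  exacts [x i j hij hj, t k hk]

@[simp, grind =]
lemma x_inj : (x i j hij hj : PosetVar f) = x k l hkl hl ↔ i = k ∧ j = l :=
  ⟨fun h => by simpa using Subtype.ext_iff.1 (Sum.inl.inj h), by rintro ⟨rfl, rfl⟩; rfl⟩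

@[simp, grind =]
lemma t_inj : (t k hk : PosetVar f) = t l hl ↔ k = l :=
  ⟨fun h => by simpa using Sum.inr.inj h, by rintro rfl; rfl⟩

@[simp, grind .]
lemma x_ne_t : (x i j hij hj : PosetVar f) ≠ t k hk :=
  Sum.inl_ne_inr

@[simp, grind .]
lemma t_ne_x : (t k hk : PosetVar f) ≠ x i j hij hj :=
  Sum.inr_ne_inl

/-- The products `x i (f - 1) * t (f - 1)` and `x (f - 2) (f - 1) * t (f - 2)` are the leading terms
of the entries of the row vector times the matrix, so these variables are left incomparable. -/
instance : LE (PosetVar f) where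
  le
  | .inl a, .inl b => a.1.1.1 ≤ b.1.1.1 ∧ a.1.2.1 ≤ b.1.2.1
  | .inl a, .inr k => ¬ (k.1 + 1 = f ∧ a.1.2.1 + 1 = f) ∧ ¬ (k.1 + 2 = f ∧ a.1.1.1 + 2 = f)
  | .inr _, .inl _ => False
  | .inr k, .inr l => l.1 ≤ k.1

@[simp, grind =]
lemma x_le_x : (x i j hij hj : PosetVar f) ≤ x k l hkl hl ↔ i ≤ k ∧ j ≤ l :=
  Iff.rfl

@[simp, grind =]
lemma x_le_t : (x i j hij hj : PosetVar f) ≤ t k hk ↔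
    ¬ (k + 1 = f ∧ j + 1 = f) ∧ ¬ (k + 2 = f ∧ i + 2 = f) :=
  Iff.rfl

@[simp, grind .]
lemma not_t_le_x : ¬ (t k hk : PosetVar f) ≤ x i j hij hj :=
  not_false

@[simp, grind =]
lemma t_le_t : (t k hk : PosetVar f) ≤ t l hl ↔ l ≤ k :=
  Iff.rfl

instance : PartialOrder (PosetVar f) where
  le_refl v := by cases v using casesXT <;> grind
  le_trans a b c := by
    cases a using casesXT <;> cases b using casesXT <;> cases c using casesXT <;> grind
  le_antisymm a b := by cases a using casesXT <;> cases b using casesXT <;> grind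

@[grind =]
lemma lt_iff_le_ne {v w : PosetVar f} : v < w ↔ v ≤ w ∧ v ≠ w :=
  lt_iff_le_and_ne

/-- The number of steps of a maximal chain from the least variable `x 0 1`. -/
def height : PosetVar f → ℕ
  | .inl a => a.1.1.1 + a.1.2.1 - 1
  | .inr k => 3 * f - 6 - k.1

@[simp, grind =]
lemma height_x : height (x i j hij hj : PosetVar f) = i + j - 1 :=
  rfl

@[simp, grind =]
lemma height_t : height (t k hk : PosetVar f) = 3 * f - 6 - k :=
  rfl

variable (hf : 4 ≤ f)
include hf

lemma height_lt (v : PosetVar f) : v.height < 3 * f - 5 := by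
  cases v using casesXT <;> grind

lemma height_strictMono : StrictMono (height : PosetVar f → ℕ) := fun v w => by
  cases v using casesXT <;> cases w using casesXT <;> grind

/-- The preferred cover of a variable. -/
def next : PosetVar f → PosetVar f
  | .inl ⟨(i, j), hij⟩ =>
    if h : j.1 + 1 < f then x i.1 (j.1 + 1) (Nat.lt_succ_of_lt hij) h
    else if h' : i.1 + 2 < f then x (i.1 + 1) (f - 1) (by lia) (by lia)
    else t (f - 3) (by lia)
  | .inr k => t (k.1 - 1) (by lia)

@[simp, grind =]
lemma next_x : next hf (x i j hij hj : PosetVar f) =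
    if h : j + 1 < f then x i (j + 1) (Nat.lt_succ_of_lt hij) h
    else if h' : i + 2 < f then x (i + 1) (f - 1) (by lia) (by lia)
    else t (f - 3) (by lia) :=
  rfl

@[simp, grind =]
lemma next_t : next hf (t k hk : PosetVar f) = t (k - 1) (by lia) :=
  rfl

lemma le_next (v : PosetVar f) : v ≤ next hf v := by
  cases v using casesXT <;> grind

lemma height_next {v : PosetVar f} (hv : v ≠ t 0 (by lia)) :
    (next hf v).height = v.height + 1 := by
  cases v using casesXT <;> grind

omit hf in
lemma isLUB_pair_iff {v w u : PosetVar f} :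
    IsLUB {v, w} u ↔ v ≤ u ∧ w ≤ u ∧ ∀ z, v ≤ z → w ≤ z → u ≤ z := by
  simp [IsLUB, IsLeast, mem_lowerBounds, and_assoc]

omit hf in
/-- A cover of `v` besides `next v`, sharing with it the join `next v'`. -/
structure IsSecondCover (hf : 4 ≤ f) (v v' : PosetVar f) : Prop where
  lt : v < v'
  ne_next : v' ≠ next hf v
  height_eq : v'.height = v.height + 1
  le_or_next_le (u : PosetVar f) : v < u → v' ≤ u ∨ next hf v ≤ u
  isLUB : IsLUB {v', next hf v} (next hf v')

lemma isSecondCover_x_t_sub_one (hij : i < j) (hj : j < f) (hi : i + 3 = f) (hj' : j + 2 = f) :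
    IsSecondCover hf (x i j hij hj) (t (f - 1) (by lia)) where
  lt := by grind
  ne_next := by grind
  height_eq := by grind
  le_or_next_le u := by cases u using casesXT <;> grind
  isLUB := by
    rw [isLUB_pair_iff]
    refine ⟨by grind, by grind, fun u => by cases u using casesXT <;> grind⟩

lemma isSecondCover_x_t_sub_two (hij : i < j) (hj : j < f) (hi : i + 3 = f) (hj' : j + 1 = f) :
    IsSecondCover hf (x i j hij hj) (t (f - 2) (by lia)) where
  lt := by grind
  ne_next := by grind
  height_eq := by grind
  le_or_next_le u := by cases u using casesXT <;> grind
  isLUB := by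
    rw [isLUB_pair_iff]
    refine ⟨by grind, by grind, fun u => by cases u using casesXT <;> grind⟩

lemma isSecondCover_x_x (hij : i < j) (hj : j < f) (hij' : i + 1 < j) (hj' : j + 1 < f) :
    IsSecondCover hf (x i j hij hj) (x (i + 1) j hij' hj) where
  lt := by grind
  ne_next := by grind
  height_eq := by grind
  le_or_next_le u := by cases u using casesXT <;> grind
  isLUB := by
    rw [isLUB_pair_iff]
    refine ⟨by grind, by grind, fun u => by cases u using casesXT <;> grind⟩

lemma next_le_or_exists_isSecondCover (v : PosetVar f) :
    (∀ u, v < u → next hf v ≤ u) ∨ ∃ v', IsSecondCover hf v v' := by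
  cases v using casesXT with
  | t k hk => exact .inl fun u => by cases u using casesXT <;> grind
  | x i j hij hj =>
    by_cases h₁ : i + 3 = f ∧ j + 2 = f
    · exact .inr ⟨_, isSecondCover_x_t_sub_one hf hij hj h₁.1 h₁.2⟩
    by_cases h₂ : i + 3 = f ∧ j + 1 = f
    · exact .inr ⟨_, isSecondCover_x_t_sub_two hf hij hj h₂.1 h₂.2⟩
    by_cases h₃ : i + 1 < j ∧ j + 1 < f
    · exact .inr ⟨_, isSecondCover_x_x hf hij hj h₃.1 h₃.2⟩
    · exact .inl fun u => by cases u using casesXT <;> grind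

/-- The rank function of the poset of variables, with values in a set of `3 * f - 5` elements: this
is the dimension of `𝓡 ⧸ J` over the base ring. -/
def ranking : WonderfulRanking (PosetVar f) (Fin (3 * f - 5)) where
  rank v := ⟨v.height, height_lt hf v⟩
  rank_strictMono _ _ h := height_strictMono hf h
  bot := x 0 1 (by lia) (by lia)
  top := t 0 (by lia)
  isBot_bot v := by cases v using casesXT <;> grind
  isTop_top v := by cases v using casesXT <;> grind
  isBot_rank_bot b := by simp [Fin.le_def]
  isTop_rank_top b := by
    simp only [Fin.le_def, height_t]
    lia
  next := next hf
  lt_next hv := lt_of_le_of_ne (le_next hf _) fun h => by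
    have := height_next hf hv
    rw [← h] at this
    lia
  rank_next hv := by
    rw [Fin.covBy_iff, Nat.covBy_iff_add_one_eq]
    exact (height_next hf hv).symm
  cover {v} hv := by
    refine (next_le_or_exists_isSecondCover hf v).imp_right fun ⟨v', h⟩ => ?_
    exact ⟨v', h.lt, h.ne_next, by simp [h.height_eq, height_next hf hv], h.le_or_next_le, h.isLUB⟩

end PosetVar

/-! ### The relations -/

section Straightening

open MvPolynomial Pointwise

variable {k σ : Type*} [CommRing k]

/-- The product of the variables `a` and `b` can be rewritten modulo `J` as a combination of
monomials of smaller weight `ω`. -/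
def IsStraightenable (J : Ideal (MvPolynomial σ k)) (ω : σ → ℕ) (a b : σ) : Prop :=
  ∃ r ∈ restrictSupport k {m | Finsupp.weight ω m < ω a + ω b}, X a * X b - r ∈ J

lemma IsStraightenable.symm {J : Ideal (MvPolynomial σ k)} {ω : σ → ℕ} {a b : σ}
    (h : IsStraightenable J ω a b) : IsStraightenable J ω b a := by
  rwa [IsStraightenable, mul_comm, add_comm]

lemma X_mul_X_mem_restrictSupport_weight {ω : σ → ℕ} {a b : σ} {n : ℕ} (h : ω a + ω b < n) :
    X a * X b ∈ restrictSupport k {m | Finsupp.weight ω m < n} := by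
  rw [X, X, monomial_mul, monomial_mem_restrictSupport]
  left
  simpa [Finsupp.weight_single] using h

lemma single_add_single_le {m : σ →₀ ℕ} {a b : σ} (ha : a ∈ m.support) (hb : b ∈ m.support)
    (hab : a ≠ b) : Finsupp.single a 1 + Finsupp.single b 1 ≤ m := by
  classical
  intro c
  simp only [Finsupp.mem_support_iff] at ha hb
  simp only [Finsupp.add_apply, Finsupp.single_apply]
  grind

lemma IsStraightenable.monomial_mem {J : Ideal (MvPolynomial σ k)} {ω : σ → ℕ} {a b : σ}
    (h : IsStraightenable J ω a b) {S : Submodule k (MvPolynomial σ k)}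
    (hJ : J.restrictScalars k ≤ S) {m : σ →₀ ℕ}
    (hm : Finsupp.single a 1 + Finsupp.single b 1 ≤ m)
    (hS : restrictSupport k {m' | Finsupp.weight ω m' < Finsupp.weight ω m} ≤ S) :
    monomial m 1 ∈ S := by
  obtain ⟨r, hr, hrJ⟩ := h
  obtain ⟨m, rfl⟩ := exists_add_of_le hm
  have hlower : r * monomial m 1 ∈
      restrictSupport k ({m' : σ →₀ ℕ | Finsupp.weight ω m' < ω a + ω b} + {m}) := by
    rw [restrictSupport_add]
    exact Submodule.mul_mem_mul hr ((monomial_mem_restrictSupport k).2 (.inl rfl))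
  have hmonomial : (monomial (Finsupp.single a 1 + Finsupp.single b 1 + m) 1 : MvPolynomial σ k) =
      (X a * X b - r) * monomial m 1 + r * monomial m 1 := by
    simp [X, sub_mul, monomial_mul]
  rw [hmonomial]
  refine add_mem (hJ (J.mul_mem_right _ hrJ)) (hS (restrictSupport_mono _ ?_ hlower))
  rintro _ ⟨m', hm', _, rfl, rfl⟩
  simpa [Finsupp.weight_single] using hm'

variable [PartialOrder σ]

lemma restrictSupport_isChain_sup_eq_top {J : Ideal (MvPolynomial σ k)} (ω : σ → ℕ)
    (h : ∀ a b : σ, ¬ a ≤ b → ¬ b ≤ a → IsStraightenable J ω a b) :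
    restrictSupport k {m | IsChain (· ≤ ·) (m.support : Set σ)} ⊔ J.restrictScalars k = ⊤ := by
  suffices ∀ m, monomial m 1 ∈
      restrictSupport k {m | IsChain (· ≤ ·) (m.support : Set σ)} ⊔ J.restrictScalars k by
    rw [eq_top_iff, ← restrictSupport_univ, restrictSupport_eq_span, Submodule.span_le]
    rintro _ ⟨m, -, rfl⟩
    exact this m
  intro m
  induction hn : Finsupp.weight ω m using Nat.strong_induction_on generalizing m with
  | h n ih =>
    subst hn
    by_cases hm : IsChain (· ≤ ·) (m.support : Set σ)
    · exact Submodule.mem_sup_left ((monomial_mem_restrictSupport k).2 (.inl hm))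
    · obtain ⟨a, ha, b, hb, hab, hincomp⟩ : ∃ a ∈ m.support, ∃ b ∈ m.support, a ≠ b ∧
          ¬ (a ≤ b ∨ b ≤ a) := by
        simpa [IsChain, Set.Pairwise] using hm
      push Not at hincomp
      refine (h a b hincomp.1 hincomp.2).monomial_mem le_sup_right
        (single_add_single_le ha hb hab) ?_
      rw [restrictSupport_eq_span, Submodule.span_le]
      rintro _ ⟨m', hm', rfl⟩
      exact ih _ hm' m' rfl

lemma exists_isStandard_sub_mem_of_isStraightenable {J : Ideal (MvPolynomial σ k)} (ω : σ → ℕ)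
    (h : ∀ a b : σ, ¬ a ≤ b → ¬ b ≤ a → IsStraightenable J ω a b) (p : MvPolynomial σ k) :
    ∃ q, IsStandard q ∧ p - q ∈ J := by
  have hp : p ∈ restrictSupport k {m | IsChain (· ≤ ·) (m.support : Set σ)} ⊔
      J.restrictScalars k := by
    rw [restrictSupport_isChain_sup_eq_top ω h]
    trivial
  obtain ⟨q, hq, r, hr, rfl⟩ := Submodule.mem_sup.1 hp
  exact ⟨q, fun m hm => hq hm, by simpa using hr⟩

end Straightening

section Relations

open MvPolynomial PosetVar

variable (k : Type u) [CommRing k] (f : ℕ)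

/-- The entry `x_{i,j}` of the generic alternating matrix, with natural number indices; it is `0`
for indices out of range. -/
def xEntry (i j : ℕ) : MvPolynomial (PosetVar f) k :=
  if h : i < j ∧ j < f then X (x i j h.1 h.2)
  else if h : j < i ∧ i < f then - X (x j i h.1 h.2) else 0

/-- The entry `t_i` of the generic row vector, with a natural number index; it is `0` for an index
out of range. -/
def tEntry (i : ℕ) : MvPolynomial (PosetVar f) k :=
  if h : i < f then X (t i h) else 0

/-- The defining ideal `Pf₄(X) + I₁(tX)`, in the variables `PosetVar f`. -/
def relationIdeal : Ideal (MvPolynomial (PosetVar f) k) :=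
  Jt k f

/-- The Pfaffian of the principal submatrix with rows `a`, `b`, `c`, `d`. -/
def pfaffian (a b c d : ℕ) : MvPolynomial (PosetVar f) k :=
  xEntry k f a b * xEntry k f c d - xEntry k f a c * xEntry k f b d +
    xEntry k f a d * xEntry k f b c

/-- The `j`-th entry of the row vector times the matrix. -/
def rowMulMatrix (j : ℕ) : MvPolynomial (PosetVar f) k :=
  ∑ i ∈ Finset.range f, tEntry k f i * xEntry k f i j

variable {k f}

lemma xEntry_of_lt {i j : ℕ} (h : i < j) (hj : j < f) : xEntry k f i j = X (x i j h hj) :=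
  dif_pos ⟨h, hj⟩

lemma xEntry_of_gt {i j : ℕ} (h : j < i) (hi : i < f) : xEntry k f i j = -X (x j i h hi) := by
  rw [xEntry, dif_neg (by lia), dif_pos ⟨h, hi⟩]

lemma xEntry_self {i : ℕ} : xEntry k f i i = 0 := by
  simp [xEntry]

lemma tEntry_of_lt {i : ℕ} (h : i < f) : tEntry k f i = X (t i h) :=
  dif_pos h

lemma xvt_eq_xEntry (i j : Fin f) :
    (xvt k f i j : MvPolynomial (PosetVar f) k) = xEntry k f i j := by
  rcases lt_trichotomy i j with h | rfl | h
  · exact (dif_pos h).trans (xEntry_of_lt h j.2).symm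
  · rw [xEntry_self]
    exact show xvt k f i i = 0 by simp [xvt]
  · exact (dif_neg h.not_gt).trans ((dif_pos h).trans (xEntry_of_gt h i.2).symm)

lemma tvt_eq_tEntry (i : Fin f) : (tvt k f i : MvPolynomial (PosetVar f) k) = tEntry k f i :=
  (tEntry_of_lt i.2).symm

lemma pf4t_eq_pfaffian (a b c d : Fin f) : pf4t k f a b c d = pfaffian k f a b c d := by
  simp only [pf4t, pfaffian, ← xvt_eq_xEntry]
  rfl

lemma tX_eq_rowMulMatrix (j : Fin f) : tX k f j = rowMulMatrix k f j := by
  rw [rowMulMatrix, ← Fin.sum_univ_eq_sum_range fun i => tEntry k f i * xEntry k f i j]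
  simp only [tX, ← xvt_eq_xEntry, ← tvt_eq_tEntry]
  rfl

lemma relationIdeal_eq_span : relationIdeal k f = Ideal.span
    ({p | ∃ a b c d, a < b ∧ b < c ∧ c < d ∧ d < f ∧ p = pfaffian k f a b c d} ∪
      {p | ∃ j < f, p = rowMulMatrix k f j}) := by
  rw [Ideal.span_union, relationIdeal, Jt, Pf4t, ItX, Submodule.add_eq_sup]
  congr 2 <;> ext p
  · constructor
    · rintro ⟨a, b, c, d, hab, hbc, hcd, rfl⟩
      exact ⟨a, b, c, d, hab, hbc, hcd, d.2, pf4t_eq_pfaffian a b c d⟩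
    · rintro ⟨a, b, c, d, hab, hbc, hcd, hd, rfl⟩
      exact ⟨⟨a, by lia⟩, ⟨b, by lia⟩, ⟨c, by lia⟩, ⟨d, hd⟩, hab, hbc, hcd,
        (pf4t_eq_pfaffian (k := k) (⟨a, by lia⟩ : Fin f) ⟨b, by lia⟩ ⟨c, by lia⟩ ⟨d, hd⟩).symm⟩
  · constructor
    · rintro ⟨j, rfl⟩
      exact ⟨j, j.2, tX_eq_rowMulMatrix j⟩
    · rintro ⟨j, hj, rfl⟩
      exact ⟨⟨j, hj⟩, (tX_eq_rowMulMatrix (k := k) (⟨j, hj⟩ : Fin f)).symm⟩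

lemma pfaffian_mem_relationIdeal {a b c d : ℕ} (hab : a < b) (hbc : b < c) (hcd : c < d)
    (hd : d < f) : pfaffian k f a b c d ∈ relationIdeal k f := by
  rw [relationIdeal_eq_span]
  exact Ideal.subset_span (.inl ⟨a, b, c, d, hab, hbc, hcd, hd, rfl⟩)

lemma rowMulMatrix_mem_relationIdeal {j : ℕ} (hj : j < f) :
    rowMulMatrix k f j ∈ relationIdeal k f := by
  rw [relationIdeal_eq_span]
  exact Ideal.subset_span (.inr ⟨j, hj, rfl⟩)

lemma xEntry_isHomogeneous (i j : ℕ) : (xEntry k f i j).IsHomogeneous 1 := by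
  unfold xEntry
  split_ifs
  exacts [isHomogeneous_X _ _, (isHomogeneous_X _ _).neg, isHomogeneous_zero _ _ _]

lemma tEntry_isHomogeneous (i : ℕ) : (tEntry k f i).IsHomogeneous 1 := by
  unfold tEntry
  split_ifs
  exacts [isHomogeneous_X _ _, isHomogeneous_zero _ _ _]

attribute [local instance] MvPolynomial.gradedAlgebra in
lemma homogeneousComponent_mem_relationIdeal {p : MvPolynomial (PosetVar f) k}
    (hp : p ∈ relationIdeal k f) (n : ℕ) : homogeneousComponent n p ∈ relationIdeal k f := by
  refine homogeneousComponent_mem_of_mem ?_ hp n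
  rw [relationIdeal_eq_span]
  apply Ideal.homogeneous_span
  have hx := xEntry_isHomogeneous (k := k) (f := f)
  rintro p (⟨a, b, c, d, -, -, -, -, rfl⟩ | ⟨j, -, rfl⟩)
  · exact ⟨2, (((hx a b).mul (hx c d)).sub ((hx a c).mul (hx b d))).add ((hx a d).mul (hx b c))⟩
  · exact ⟨2, IsHomogeneous.sum _ _ _ fun i _ => (tEntry_isHomogeneous i).mul (hx i j)⟩

namespace PosetVar

/-- Weights for which the straightening relations decrease the weight: `x i j * x a b` with
`i < a < b < j` is the heaviest product in its Pfaffian, and the products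
`x i (f - 1) * t (f - 1)` and `x (f - 2) (f - 1) * t (f - 2)` are the heaviest in the entries of
the row vector times the matrix. -/
def weight : PosetVar f → ℕ
  | .inl a => (a.1.2.1 - a.1.1.1) ^ 2
  | .inr k => if k.1 + 1 = f then 3 * f ^ 2 else if k.1 + 2 = f then 2 * f ^ 2 else 0

lemma weight_x {i j : ℕ} {hij : i < j} {hj : j < f} :
    weight (x i j hij hj : PosetVar f) = (j - i) ^ 2 :=
  rfl

lemma weight_t {i : ℕ} {hi : i < f} : weight (t i hi : PosetVar f) =
    if i + 1 = f then 3 * f ^ 2 else if i + 2 = f then 2 * f ^ 2 else 0 :=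
  rfl

lemma weight_x_lt {i j : ℕ} {hij : i < j} {hj : j < f} :
    weight (x i j hij hj : PosetVar f) < f ^ 2 :=
  Nat.pow_lt_pow_left (by lia) two_ne_zero

end PosetVar

lemma isStraightenable_x_x {i a b j : ℕ} (hia : i < a) (hab : a < b) (hbj : b < j) (hj : j < f) :
    IsStraightenable (relationIdeal k f) weight (x i j (by lia) hj) (x a b hab (by lia)) := by
  have hPf := pfaffian_mem_relationIdeal (k := k) hia hab hbj hj
  rw [pfaffian, xEntry_of_lt hia (by lia), xEntry_of_lt hbj hj,
    xEntry_of_lt (hia.trans hab) (by lia), xEntry_of_lt (hab.trans hbj) hj,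
    xEntry_of_lt (by lia) hj, xEntry_of_lt hab (by lia)] at hPf
  refine ⟨X (x i b (by lia) (by lia)) * X (x a j (by lia) hj) -
    X (x i a hia (by lia)) * X (x b j hbj hj), sub_mem ?_ ?_, by convert hPf using 1; ring⟩
  all_goals
    apply X_mul_X_mem_restrictSupport_weight
    simp only [weight_x]
    obtain ⟨c, rfl⟩ := Nat.exists_eq_add_of_lt hia
    obtain ⟨d, rfl⟩ := Nat.exists_eq_add_of_lt hab
    obtain ⟨e, rfl⟩ := Nat.exists_eq_add_of_lt hbj
    zify [show i ≤ i + c + 1 by lia, show i ≤ i + c + 1 + d + 1 by lia,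
      show i ≤ i + c + 1 + d + 1 + e + 1 by lia, show i + c + 1 ≤ i + c + 1 + d + 1 by lia,
      show i + c + 1 ≤ i + c + 1 + d + 1 + e + 1 by lia,
      show i + c + 1 + d + 1 ≤ i + c + 1 + d + 1 + e + 1 by lia]
    nlinarith

lemma tEntry_mul_xEntry_mem_restrictSupport {i j n : ℕ} (hi : i < f)
    (h : weight (t i hi : PosetVar f) + f ^ 2 ≤ n) :
    tEntry k f i * xEntry k f i j ∈ restrictSupport k {m | Finsupp.weight weight m < n} := by
  rw [tEntry_of_lt hi, xEntry]
  split_ifs with hij hji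
  · exact X_mul_X_mem_restrictSupport_weight ((Nat.add_lt_add_left weight_x_lt _).trans_le h)
  · rw [mul_neg]
    exact neg_mem <|
      X_mul_X_mem_restrictSupport_weight ((Nat.add_lt_add_left weight_x_lt _).trans_le h)
  · simp

lemma exists_tEntry_mul_xEntry_sub_mem {i j n : ℕ} (hi : i < f) (hj : j < f)
    (h : ∀ l (hl : l < f), l ≠ i → l ≠ j → weight (t l hl : PosetVar f) + f ^ 2 ≤ n) :
    ∃ r ∈ restrictSupport k {m | Finsupp.weight weight m < n},
      tEntry k f i * xEntry k f i j - r ∈ relationIdeal k f := by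
  refine ⟨-∑ l ∈ (Finset.range f).erase i, tEntry k f l * xEntry k f l j,
    neg_mem (sum_mem fun l hl => ?_), ?_⟩
  · obtain ⟨hli, hl⟩ := Finset.mem_erase.1 hl
    by_cases hlj : l = j
    · simp [hlj, xEntry_self]
    · exact tEntry_mul_xEntry_mem_restrictSupport _ (h l (Finset.mem_range.1 hl) hli hlj)
  · rw [sub_neg_eq_add, Finset.add_sum_erase _ (fun l => tEntry k f l * xEntry k f l j)
      (Finset.mem_range.2 hi)]
    exact rowMulMatrix_mem_relationIdeal hj

lemma isStraightenable_x_t {i j l : ℕ} {hij : i < j} {hj : j < f} {hl : l < f}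
    (h : ¬ (x i j hij hj : PosetVar f) ≤ t l hl) :
    IsStraightenable (relationIdeal k f) weight (x i j hij hj) (t l hl) := by
  rw [x_le_t] at h
  by_cases hlast : l + 1 = f ∧ j + 1 = f
  · obtain rfl : l = j := by lia
    obtain ⟨r, hr, hrJ⟩ := exists_tEntry_mul_xEntry_sub_mem (k := k)
      (n := weight (x i l hij hj : PosetVar f) + weight (t l hl : PosetVar f)) hl (hij.trans hj)
      fun m hm hml _ => by grind [weight_t]
    rw [tEntry_of_lt hl, xEntry_of_gt hij hj] at hrJ
    exact ⟨-r, neg_mem hr, by convert neg_mem hrJ using 1; ring⟩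
  · obtain rfl : i = l := by lia
    obtain ⟨r, hr, hrJ⟩ := exists_tEntry_mul_xEntry_sub_mem (k := k)
      (n := weight (x i j hij hj : PosetVar f) + weight (t i hl : PosetVar f)) hl hj
      fun m hm hmi hmj => by grind [weight_t]
    rw [tEntry_of_lt hl, xEntry_of_lt hij hj, mul_comm] at hrJ
    exact ⟨r, hr, hrJ⟩

lemma isStraightenable_relationIdeal {a b : PosetVar f} (hab : ¬ a ≤ b) (hba : ¬ b ≤ a) :
    IsStraightenable (relationIdeal k f) weight a b := by
  cases a using casesXT with
  | x i j hij hj =>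
    cases b using casesXT with
    | x c d hcd hd =>
      rw [x_le_x] at hab hba
      rcases lt_or_ge i c with hic | hci
      · exact isStraightenable_x_x hic hcd (by lia) hj
      · exact (isStraightenable_x_x (by lia) hij (by lia) hd).symm
    | t l hl => exact isStraightenable_x_t hab
  | t l hl =>
    cases b using casesXT with
    | x i j hij hj => exact (isStraightenable_x_t hba).symm
    | t m hm => grind

end Relations

section RankTwo

open MvPolynomial PosetVar

variable {k : Type u} [CommRing k] {f : ℕ} {L : Type*} [CommRing L]
  {φ : MvPolynomial (PosetVar f) k →+* L} {p q : ℕ → L} {c : L}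

lemma map_xEntry_eq_minor (hx : ∀ i j hij hj, φ (X (x i j hij hj)) = c * (p i * q j - p j * q i))
    {i j : ℕ} (hi : i < f) (hj : j < f) : φ (xEntry k f i j) = c * (p i * q j - p j * q i) := by
  rcases lt_trichotomy i j with h | rfl | h
  · rw [xEntry_of_lt h hj, hx]
  · rw [xEntry_self, map_zero, sub_self, mul_zero]
  · rw [xEntry_of_gt h hi, map_neg, hx]
    ring

lemma relationIdeal_le_ker
    (hx : ∀ i j hij hj, φ (X (x i j hij hj)) = c * (p i * q j - p j * q i))
    (hp : ∑ i ∈ Finset.range f, φ (tEntry k f i) * p i = 0)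
    (hq : ∑ i ∈ Finset.range f, φ (tEntry k f i) * q i = 0) :
    relationIdeal k f ≤ RingHom.ker φ := by
  rw [relationIdeal_eq_span, Ideal.span_le]
  rintro _ (⟨a, b, c, d, hab, hbc, hcd, hd, rfl⟩ | ⟨j, hj, rfl⟩)
  · rw [SetLike.mem_coe, RingHom.mem_ker, pfaffian]
    simp only [map_add, map_sub, map_mul]
    repeat rw [map_xEntry_eq_minor hx (by lia) (by lia)]
    ring
  · have hterm : ∀ i ∈ Finset.range f, φ (tEntry k f i * xEntry k f i j) =
        φ (tEntry k f i) * p i * (c * q j) - φ (tEntry k f i) * q i * (c * p j) := fun i hi => by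
      rw [map_mul, map_xEntry_eq_minor hx (Finset.mem_range.1 hi) hj]
      ring
    rw [SetLike.mem_coe, RingHom.mem_ker, rowMulMatrix, map_sum, Finset.sum_congr rfl hterm,
      Finset.sum_sub_distrib, ← Finset.sum_mul, ← Finset.sum_mul, hp, hq, zero_mul, zero_mul,
      sub_zero]

end RankTwo

section Parametrization

open MvPolynomial PosetVar

/-- The parameters of a generic point of the variety of `relationIdeal`: two vectors `u`, `v`
spanning the row space of the matrix, a scalar `c`, and the coefficients `w` of the row vector. -/
inductive Param : Type
  | u (n : ℕ)
  | v (n : ℕ)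
  | w (n : ℕ)
  | c

variable (k : Type u) [CommRing k] (f : ℕ)

/-- The `2 × 2` minor of the vectors of parameters `u` and `v` in columns `a` and `b`. -/
def minor (a b : ℕ) : MvPolynomial Param k :=
  X (.u a) * X (.v b) - X (.u b) * X (.v a)

/-- The entries of a generic row vector orthogonal to `u` and `v`: the first `f - 2` ones are free
up to a common factor, and determine the other two by Cramer's rule. -/
def tParam (i : ℕ) : MvPolynomial Param k :=
  if i + 1 = f then ∑ l ∈ Finset.range (f - 2), X (.w l) * minor k l (f - 2)
  else if i + 2 = f then -∑ l ∈ Finset.range (f - 2), X (.w l) * minor k l (f - 1)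
  else X (.w i) * minor k (f - 2) (f - 1)

/-- The parametrization of the variety of `relationIdeal`. -/
def paramHom : MvPolynomial (PosetVar f) k →ₐ[k] MvPolynomial Param k :=
  aeval fun
    | .inl a => X .c * minor k a.1.1 a.1.2
    | .inr i => tParam k f i

variable {k f}

lemma tParam_of_add_one {i : ℕ} (h : i + 1 = f) :
    tParam k f i = ∑ l ∈ Finset.range (f - 2), X (.w l) * minor k l (f - 2) :=
  if_pos h

lemma tParam_of_add_two {i : ℕ} (h : i + 2 = f) :
    tParam k f i = -∑ l ∈ Finset.range (f - 2), X (.w l) * minor k l (f - 1) := by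
  rw [tParam, if_neg (by lia), if_pos h]

lemma tParam_of_lt {i : ℕ} (h : i + 2 < f) :
    tParam k f i = X (.w i) * minor k (f - 2) (f - 1) := by
  rw [tParam, if_neg (by lia), if_neg (by lia)]

lemma paramHom_X_x {i j : ℕ} (hij : i < j) (hj : j < f) :
    paramHom k f (X (x i j hij hj)) = X .c * minor k i j :=
  aeval_X _ _

lemma paramHom_X_t {i : ℕ} (hi : i < f) : paramHom k f (X (t i hi)) = tParam k f i :=
  aeval_X _ _

lemma paramHom_tEntry {i : ℕ} (hi : i < f) : paramHom k f (tEntry k f i) = tParam k f i := by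
  rw [tEntry_of_lt hi, paramHom_X_t]

lemma sum_tParam_mul_eq_zero (hf : 2 ≤ f) {z : ℕ → MvPolynomial Param k}
    (hz : ∀ a b c, minor k a b * z c - minor k a c * z b + minor k b c * z a = 0) :
    ∑ i ∈ Finset.range f, tParam k f i * z i = 0 := by
  obtain ⟨g, rfl⟩ := Nat.exists_eq_add_of_le' hf
  have hfirst : ∑ i ∈ Finset.range g, tParam k (g + 2) i * z i =
      ∑ i ∈ Finset.range g, X (.w i) * (minor k g (g + 1) * z i) :=
    Finset.sum_congr rfl fun i hi => by
      rw [tParam_of_lt (by grind), mul_assoc]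
      rfl
  have hpenult : tParam k (g + 2) g = -∑ l ∈ Finset.range g, X (.w l) * minor k l (g + 1) :=
    tParam_of_add_two rfl
  have hlast : tParam k (g + 2) (g + 1) = ∑ l ∈ Finset.range g, X (.w l) * minor k l g :=
    tParam_of_add_one rfl
  rw [Finset.sum_range_succ, Finset.sum_range_succ, hfirst, hpenult, hlast,
    ← Finset.sum_neg_distrib, Finset.sum_mul, Finset.sum_mul, ← Finset.sum_add_distrib,
    ← Finset.sum_add_distrib]
  refine Finset.sum_eq_zero fun i _ => ?_
  linear_combination X (.w i) * hz i g (g + 1)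

lemma relationIdeal_le_ker_paramHom (hf : 2 ≤ f) :
    relationIdeal k f ≤ RingHom.ker (paramHom k f) := by
  have hsum (z : ℕ → MvPolynomial Param k)
      (hz : ∀ a b c, minor k a b * z c - minor k a c * z b + minor k b c * z a = 0) :
      ∑ i ∈ Finset.range f, paramHom k f (tEntry k f i) * z i = 0 := by
    rw [← sum_tParam_mul_eq_zero hf hz]
    exact Finset.sum_congr rfl fun i hi => by rw [paramHom_tEntry (Finset.mem_range.1 hi)]
  refine relationIdeal_le_ker (φ := (paramHom k f).toRingHom)
    (fun i j hij hj => paramHom_X_x hij hj)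
    (hsum (fun i => X (.u i)) ?_) (hsum (fun i => X (.v i)) ?_) <;>
  · intro a b c
    simp only [minor]
    ring

/-- The parameters which do not vanish on the Schubert variety of `y`. -/
def IsFreeParam : PosetVar f → Param → Prop
  | .inl a, .u n => a.1.1.1 ≤ n
  | .inl a, .v n => a.1.2.1 ≤ n
  | .inl _, .w _ => True
  | .inl _, .c => True
  | .inr i, .u n => f - 3 ≤ n ∧ (i.1 + 2 < f → f - 2 ≤ n)
  | .inr i, .v n => f - 2 ≤ n ∧ (i.1 + 1 < f → f - 1 ≤ n)
  | .inr i, .w n => n ≤ i.1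
  | .inr _, .c => False

section IsFreeParam

variable {i j n : ℕ} {hij : i < j} {hj : j < f} {hi : i < f}

@[simp, grind =]
lemma isFreeParam_x_u : IsFreeParam (x i j hij hj : PosetVar f) (.u n) ↔ i ≤ n :=
  Iff.rfl

@[simp, grind =]
lemma isFreeParam_x_v : IsFreeParam (x i j hij hj : PosetVar f) (.v n) ↔ j ≤ n :=
  Iff.rfl

@[simp, grind .]
lemma isFreeParam_x_w : IsFreeParam (x i j hij hj : PosetVar f) (.w n) :=
  trivial

@[simp, grind .]
lemma isFreeParam_x_c : IsFreeParam (x i j hij hj : PosetVar f) .c :=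
  trivial

@[simp, grind =]
lemma isFreeParam_t_u :
    IsFreeParam (t i hi : PosetVar f) (.u n) ↔ f - 3 ≤ n ∧ (i + 2 < f → f - 2 ≤ n) :=
  Iff.rfl

@[simp, grind =]
lemma isFreeParam_t_v :
    IsFreeParam (t i hi : PosetVar f) (.v n) ↔ f - 2 ≤ n ∧ (i + 1 < f → f - 1 ≤ n) :=
  Iff.rfl

@[simp, grind =]
lemma isFreeParam_t_w : IsFreeParam (t i hi : PosetVar f) (.w n) ↔ n ≤ i :=
  Iff.rfl

@[simp, grind .]
lemma not_isFreeParam_t_c : ¬ IsFreeParam (t i hi : PosetVar f) .c :=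
  not_false

end IsFreeParam

lemma IsFreeParam.anti (hf : 4 ≤ f) {y z : PosetVar f} (h : y ≤ z) {p : Param}
    (hp : IsFreeParam z p) : IsFreeParam y p := by
  cases y using casesXT <;> cases z using casesXT <;> cases p <;> grind

variable (k) in
/-- The parametrization of the Schubert variety of `y`. -/
def schubertHom (y : PosetVar f) : MvPolynomial (PosetVar f) k →ₐ[k] MvPolynomial Param k :=
  (restrictVars {p | IsFreeParam y p}).comp (paramHom k f)

lemma restrictVars_minor_eq_zero {s : Set Param} {a b : ℕ} (ha : .v a ∉ s)
    (hab : .u a ∉ s ∨ .v b ∉ s) : restrictVars s (minor k a b) = 0 := by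
  rcases hab with h | h <;>
    simp [minor, restrictVars_X_of_notMem ha, restrictVars_X_of_notMem h]

lemma restrictVars_minor {s : Set Param} {a b : ℕ} (hva : .v a ∉ s) (hua : .u a ∈ s)
    (hvb : .v b ∈ s) : restrictVars s (minor k a b) = X (.u a) * X (.v b) := by
  simp [minor, restrictVars_X_of_notMem hva, restrictVars_X_of_mem hua, restrictVars_X_of_mem hvb]

lemma restrictVars_sum_X_mul_minor_eq_zero {s : Set Param} {n b : ℕ}
    (h : ∀ l < n, .v l ∉ s ∧ (.u l ∉ s ∨ .v b ∉ s)) :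
    restrictVars s (∑ l ∈ Finset.range n, X (.w l) * minor k l b) = 0 := by
  rw [map_sum]
  refine Finset.sum_eq_zero fun l hl => ?_
  obtain ⟨hv, huv⟩ := h l (Finset.mem_range.1 hl)
  rw [map_mul, restrictVars_minor_eq_zero hv huv, mul_zero]

lemma restrictVars_sum_succ_X_mul_minor {s : Set Param} {n b : ℕ}
    (h : ∀ l < n, .v l ∉ s ∧ (.u l ∉ s ∨ .v b ∉ s)) (hw : .w n ∈ s) (hu : .u n ∈ s)
    (hv : .v n ∉ s) (hb : .v b ∈ s) :
    restrictVars s (∑ l ∈ Finset.range (n + 1), X (.w l) * minor k l b) =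
      X (.w n) * (X (.u n) * X (.v b)) := by
  rw [Finset.sum_range_succ, map_add, restrictVars_sum_X_mul_minor_eq_zero h, map_mul,
    restrictVars_minor hv hu hb, restrictVars_X_of_mem hw, zero_add]

lemma schubertHom_X_eq_zero (hf : 4 ≤ f) {y z : PosetVar f} (h : ¬ y ≤ z) :
    schubertHom k y (X z) = 0 := by
  cases y using casesXT with
  | x i j hij hj =>
    cases z using casesXT with
    | x a b hab hb =>
      rw [schubertHom, AlgHom.comp_apply, paramHom_X_x, map_mul,
        restrictVars_minor_eq_zero (by grind) (by grind), mul_zero]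
    | t l hl =>
      rw [schubertHom, AlgHom.comp_apply, paramHom_X_t]
      by_cases hlast : l + 1 = f
      · rw [tParam_of_add_one hlast, restrictVars_sum_X_mul_minor_eq_zero (by grind)]
      · rw [tParam_of_add_two (by grind), map_neg,
          restrictVars_sum_X_mul_minor_eq_zero (by grind), neg_zero]
  | t i hi =>
    cases z using casesXT with
    | x a b hab hb =>
      rw [schubertHom, AlgHom.comp_apply, paramHom_X_x, map_mul,
        restrictVars_X_of_notMem (by grind), zero_mul]
    | t l hl =>
      rw [schubertHom, AlgHom.comp_apply, paramHom_X_t]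
      rcases lt_trichotomy (l + 2) f with hlt | hpen | hgt
      · rw [tParam_of_lt hlt, map_mul, restrictVars_X_of_notMem (by grind), zero_mul]
      · rw [tParam_of_add_two hpen, map_neg, restrictVars_sum_X_mul_minor_eq_zero (by grind),
          neg_zero]
      · rw [tParam_of_add_one (by lia), restrictVars_sum_X_mul_minor_eq_zero (by grind)]

lemma schubertHom_X_self_ne_zero [IsDomain k] (hf : 4 ≤ f) (y : PosetVar f) :
    schubertHom k y (X y) ≠ 0 := by
  have hX (p q r : Param) : (X p * (X q * X r) : MvPolynomial Param k) ≠ 0 :=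
    mul_ne_zero (X_ne_zero p) (mul_ne_zero (X_ne_zero q) (X_ne_zero r))
  cases y using casesXT with
  | x i j hij hj =>
    rw [schubertHom, AlgHom.comp_apply, paramHom_X_x, map_mul, restrictVars_X_of_mem (by grind),
      restrictVars_minor (by grind) (by grind) (by grind)]
    exact hX _ _ _
  | t l hl =>
    rw [schubertHom, AlgHom.comp_apply, paramHom_X_t]
    rcases lt_trichotomy (l + 2) f with hlt | hpen | hgt
    · rw [tParam_of_lt hlt, map_mul, restrictVars_X_of_mem (by grind),
        restrictVars_minor (by grind) (by grind) (by grind)]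
      exact hX _ _ _
    · rw [tParam_of_add_two hpen, map_neg, show f - 2 = f - 3 + 1 by lia,
        restrictVars_sum_succ_X_mul_minor (by grind) (by grind) (by grind) (by grind) (by grind)]
      exact neg_ne_zero.2 (hX _ _ _)
    · rw [tParam_of_add_one (by lia), show Finset.range (f - 2) = Finset.range (f - 3 + 1) by grind,
        restrictVars_sum_succ_X_mul_minor (by grind) (by grind) (by grind) (by grind) (by grind)]
      exact hX _ _ _

lemma constantCoeff_paramHom (p : MvPolynomial (PosetVar f) k) :
    constantCoeff (paramHom k f p) = constantCoeff p := by
  suffices constantCoeff.comp (paramHom k f).toRingHom = constantCoeff from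
    RingHom.congr_fun this p
  refine ringHom_ext (fun r => by simp) fun y => ?_
  cases y using casesXT with
  | x i j hij hj =>
    change constantCoeff (paramHom k f (X _)) = _
    simp [paramHom_X_x]
  | t l hl =>
    change constantCoeff (paramHom k f (X _)) = _
    rw [paramHom_X_t, tParam]
    split_ifs <;> simp

lemma ker_schubertHom_mono (hf : 4 ≤ f) {y z : PosetVar f} (h : y ≤ z) :
    RingHom.ker (schubertHom k y) ≤ RingHom.ker (schubertHom k z) := fun p hp => by
  have hsub : {q | IsFreeParam z q} ⊆ {q | IsFreeParam y q} := fun _ => IsFreeParam.anti hf h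
  rw [RingHom.mem_ker, schubertHom, AlgHom.comp_apply] at hp ⊢
  rw [← restrictVars_restrictVars_of_subset hsub, hp, map_zero]

variable (k) in
/-- The straightening law of `𝓡 ⧸ J`. The primes are the kernels of the parametrizations of the
Schubert varieties. -/
def straighteningLaw [IsDomain k] (hf : 4 ≤ f) : StraighteningLaw k (PosetVar f) where
  J := relationIdeal k f
  K y := RingHom.ker (schubertHom k y)
  isPrime_K _ := RingHom.ker_isPrime _
  J_le_K y p hp := by
    have : paramHom k f p = 0 := relationIdeal_le_ker_paramHom (by lia) hp
    rw [RingHom.mem_ker, schubertHom, AlgHom.comp_apply, this, map_zero]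
  X_mem_K := schubertHom_X_eq_zero hf
  X_notMem_K := schubertHom_X_self_ne_zero hf
  K_mono _ _ := ker_schubertHom_mono hf
  constantCoeff_eq_zero {y p} hp := by
    rw [← constantCoeff_paramHom, ← constantCoeff_restrictVars {q | IsFreeParam y q}]
    exact (congrArg constantCoeff hp).trans (map_zero _)
  exists_isStandard_sub_mem := exists_isStandard_sub_mem_of_isStraightenable weight
    fun _ _ => isStraightenable_relationIdeal
  homogeneousComponent_mem_J := homogeneousComponent_mem_relationIdeal

end Parametrization

/-! ### Factoriality -/

section PrimeVariable

open MvPolynomial Set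

variable {k σ : Type*} [CommRing k] [IsDomain k] [PartialOrder σ] [WellFoundedGT σ]

lemma StraighteningLaw.prime_mk_X (D : StraighteningLaw k σ) {a b : σ} (h : (Ici b)ᶜ = {a}) :
    Prime (Ideal.Quotient.mk D.J (X a)) := by
  have hne : Ideal.Quotient.mk D.J (X a) ≠ 0 := fun h0 =>
    D.X_notMem_K a (D.J_le_K a (Ideal.Quotient.eq_zero_iff_mem.1 h0))
  have hmap : (D.K b).map (Ideal.Quotient.mk D.J) =
      Ideal.span {Ideal.Quotient.mk D.J (X a)} := by
    rw [D.K_eq_sup, h, Ideal.map_sup, Ideal.map_quotient_self, bot_sup_eq, Ideal.map_span,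
      image_singleton, image_singleton]
  have := D.isPrime_K b
  rw [← Ideal.span_singleton_prime hne, ← hmap]
  exact Ideal.map_isPrime_of_surjective Ideal.Quotient.mk_surjective (by simpa using D.J_le_K b)

end PrimeVariable

section Localization

lemma isLocalizationAway_algebraMap {U A L : Type*} [CommRing U] [CommRing A] [CommRing L]
    [Algebra U A] [Algebra A L] [Algebra U L] [IsScalarTower U A L] (y : U)
    [IsLocalization.Away y L]
    (h : ∀ a : A, ∃ n u, algebraMap U A y ^ n * a = algebraMap U A u) :
    IsLocalization.Away (algebraMap U A y) L := by
  have hunit : IsUnit (algebraMap A L (algebraMap U A y)) := by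
    rw [← IsScalarTower.algebraMap_apply]
    exact IsLocalization.Away.algebraMap_isUnit y
  refine (isLocalization_iff _ _).2 ⟨?_, fun z => ?_, fun {a b} hab => ?_⟩
  · rintro ⟨_, n, rfl⟩
    rw [map_pow]
    exact hunit.pow n
  · obtain ⟨n, u, hu⟩ := IsLocalization.Away.surj y z
    exact ⟨(algebraMap U A u, ⟨_, n, rfl⟩), by simpa [← IsScalarTower.algebraMap_apply] using hu⟩
  · obtain ⟨n, u, hu⟩ := h (a - b)
    have hu0 : algebraMap U L u = algebraMap U L 0 := by
      rw [IsScalarTower.algebraMap_apply U A L, ← hu, map_mul, map_sub, hab, sub_self, mul_zero,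
        map_zero]
    obtain ⟨⟨_, m, rfl⟩, hm⟩ := IsLocalization.exists_of_eq (M := .powers y) hu0
    refine ⟨⟨_, m + n, rfl⟩, sub_eq_zero.1 ?_⟩
    simp only [← mul_sub, pow_add, mul_assoc, hu]
    rw [← map_pow, ← map_mul, hm, mul_zero, map_zero]

end Localization

section Chart

open MvPolynomial PosetVar

variable (k : Type u) [CommRing k] {f : ℕ}

/-- The free coordinates on the chart `x 0 1 ≠ 0`: the first two rows of the matrix, and the
entries of the row vector other than the first two. -/
def IsChartVar : PosetVar f → Prop
  | .inl a => a.1.1.1 ≤ 1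
  | .inr i => 2 ≤ i.1

@[simp]
lemma isChartVar_x {i j : ℕ} {hij : i < j} {hj : j < f} :
    IsChartVar (x i j hij hj : PosetVar f) ↔ i ≤ 1 :=
  Iff.rfl

@[simp]
lemma isChartVar_t {i : ℕ} {hi : i < f} : IsChartVar (t i hi : PosetVar f) ↔ 2 ≤ i :=
  Iff.rfl

variable (f)

/-- The polynomial ring in the free coordinates on the chart `x 0 1 ≠ 0`. -/
abbrev ChartRing : Type u :=
  MvPolynomial {v : PosetVar f // IsChartVar v} k

/-- The projection onto the polynomial ring in the chart coordinates. -/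
def chartProj : MvPolynomial (PosetVar f) k →ₐ[k] ChartRing k f :=
  killCompl Subtype.val_injective

/-- The coordinate `x 0 1` which is invertible on the chart. -/
def pivot : ChartRing k f :=
  chartProj k f (xEntry k f 0 1)

/-- The pairing of the row vector, with its first two entries deleted, with row `r` of the
matrix. -/
def chartPairing (r : ℕ) : ChartRing k f :=
  ∑ i ∈ Finset.range f, chartProj k f (tEntry k f i) * chartProj k f (xEntry k f r i)

/-- The chart `x 0 1 ≠ 0`: there the first two rows span the row space of the matrix, and the first
two entries of the row vector are determined by its orthogonality to them. -/
def toChart : MvPolynomial (PosetVar f) k →ₐ[k] Localization.Away (pivot k f) :=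
  aeval fun
    | .inl a => IsLocalization.Away.invSelf (pivot k f) * algebraMap _ _
        (chartProj k f (xEntry k f 0 a.1.1) * chartProj k f (xEntry k f 1 a.1.2) -
          chartProj k f (xEntry k f 0 a.1.2) * chartProj k f (xEntry k f 1 a.1.1))
    | .inr i => algebraMap _ _ (chartProj k f (tEntry k f i)) +
        IsLocalization.Away.invSelf (pivot k f) * algebraMap _ _
          (if i.1 = 0 then chartPairing k f 1 else if i.1 = 1 then -chartPairing k f 0 else 0)

variable {k f}

lemma chartProj_X_of_isChartVar {v : PosetVar f} (h : IsChartVar v) :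
    chartProj k f (X v) = X ⟨v, h⟩ := by
  rw [← killCompl_rename_app (R := k) Subtype.val_injective (X ⟨v, h⟩), rename_X, chartProj]

lemma chartProj_xEntry_one_zero (hf : 1 < f) : chartProj k f (xEntry k f 1 0) = -pivot k f := by
  rw [pivot, xEntry_of_gt one_pos hf, xEntry_of_lt one_pos hf, map_neg]

lemma pivot_eq_X (hf : 1 < f) : pivot k f = X ⟨x 0 1 one_pos hf, isChartVar_x.2 zero_le_one⟩ := by
  rw [pivot, xEntry_of_lt one_pos hf, chartProj_X_of_isChartVar]

lemma toChart_X_x {i j : ℕ} (hij : i < j) (hj : j < f) : toChart k f (X (x i j hij hj)) =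
    IsLocalization.Away.invSelf (pivot k f) * algebraMap _ _
      (chartProj k f (xEntry k f 0 i) * chartProj k f (xEntry k f 1 j) -
        chartProj k f (xEntry k f 0 j) * chartProj k f (xEntry k f 1 i)) :=
  aeval_X _ _

lemma toChart_tEntry {i : ℕ} (hi : i < f) : toChart k f (tEntry k f i) =
    algebraMap _ _ (chartProj k f (tEntry k f i)) +
      IsLocalization.Away.invSelf (pivot k f) * algebraMap _ _
        (if i = 0 then chartPairing k f 1 else if i = 1 then -chartPairing k f 0 else 0) := by
  rw [tEntry_of_lt hi]
  conv_rhs => rw [← tEntry_of_lt hi]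
  exact aeval_X _ _

lemma toChart_X_of_isChartVar (hf : 1 < f) {v : PosetVar f} (h : IsChartVar v) :
    toChart k f (X v) = algebraMap _ _ (X ⟨v, h⟩ : ChartRing k f) := by
  cases v using casesXT with
  | x i j hij hj =>
    rw [toChart_X_x, ← chartProj_X_of_isChartVar h]
    obtain rfl | rfl : i = 0 ∨ i = 1 := by rw [isChartVar_x] at h; lia
    · rw [xEntry_self, map_zero, zero_mul, zero_sub, chartProj_xEntry_one_zero hf,
        xEntry_of_lt hij hj, mul_neg, neg_neg, map_mul, mul_left_comm,
        mul_comm _ (algebraMap _ _ (pivot k f)), IsLocalization.Away.mul_invSelf, mul_one]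
    · rw [xEntry_self, map_zero, mul_zero, sub_zero, ← pivot, xEntry_of_lt hij hj, map_mul,
        ← mul_assoc, mul_comm _ (algebraMap _ _ (pivot k f)), IsLocalization.Away.mul_invSelf,
        one_mul]
  | t i hi =>
    have h2 : 2 ≤ i := h
    rw [← tEntry_of_lt hi, toChart_tEntry hi, if_neg (by lia), if_neg (by lia), map_zero, mul_zero,
      add_zero, tEntry_of_lt hi, chartProj_X_of_isChartVar h]

lemma sum_toChart_tEntry_mul (hf : 1 < f) (r : ℕ) : ∑ i ∈ Finset.range f,
      toChart k f (tEntry k f i) * algebraMap _ _ (chartProj k f (xEntry k f r i)) =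
    algebraMap _ _ (chartPairing k f r) + IsLocalization.Away.invSelf (pivot k f) *
      algebraMap _ _ (chartPairing k f 1 * chartProj k f (xEntry k f r 0) -
        chartPairing k f 0 * chartProj k f (xEntry k f r 1)) := by
  have hite : ∑ i ∈ Finset.range f,
      (if i = 0 then chartPairing k f 1 else if i = 1 then -chartPairing k f 0 else 0) *
        chartProj k f (xEntry k f r i) =
      chartPairing k f 1 * chartProj k f (xEntry k f r 0) -
        chartPairing k f 0 * chartProj k f (xEntry k f r 1) := by
    rw [← Finset.sum_subset (s₁ := {0, 1}) (by grind) (by grind), Finset.sum_pair zero_ne_one]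
    simp [sub_eq_add_neg]
  rw [← hite, chartPairing, map_sum, map_sum, Finset.mul_sum, ← Finset.sum_add_distrib]
  refine Finset.sum_congr rfl fun i hi => ?_
  rw [toChart_tEntry (Finset.mem_range.1 hi), map_mul, map_mul]
  ring

lemma relationIdeal_le_ker_toChart (hf : 1 < f) :
    relationIdeal k f ≤ RingHom.ker (toChart k f) := by
  have hinv : algebraMap _ (Localization.Away (pivot k f)) (pivot k f) *
    IsLocalization.Away.invSelf (pivot k f) = 1 := IsLocalization.Away.mul_invSelf _
  refine relationIdeal_le_ker (φ := (toChart k f).toRingHom)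
    (p := fun i => algebraMap _ (Localization.Away (pivot k f)) (chartProj k f (xEntry k f 0 i)))
    (q := fun i => algebraMap _ (Localization.Away (pivot k f)) (chartProj k f (xEntry k f 1 i)))
    (c := IsLocalization.Away.invSelf (pivot k f))
    (fun i j hij hj => (toChart_X_x hij hj).trans (by simp only [map_sub, map_mul]))
    ((sum_toChart_tEntry_mul hf 0).trans ?_) ((sum_toChart_tEntry_mul hf 1).trans ?_)
  · rw [xEntry_self, ← pivot]
    simp only [map_zero, mul_zero, zero_sub, map_neg, map_mul]
    linear_combination -algebraMap _ (Localization.Away (pivot k f)) (chartPairing k f 0) * hinv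
  · rw [xEntry_self, chartProj_xEntry_one_zero hf]
    simp only [map_zero, mul_zero, sub_zero, map_neg, map_mul]
    linear_combination -algebraMap _ (Localization.Away (pivot k f)) (chartPairing k f 1) * hinv

variable (k f) in
/-- The homomorphism from the polynomial ring in the chart coordinates to `𝓡 ⧸ J`. -/
def chartIncl : ChartRing k f →ₐ[k] MvPolynomial (PosetVar f) k ⧸ relationIdeal k f :=
  (Ideal.Quotient.mkₐ k (relationIdeal k f)).comp (rename Subtype.val)

lemma chartIncl_X (v : {v : PosetVar f // IsChartVar v}) :
    chartIncl k f (X v) = Ideal.Quotient.mk (relationIdeal k f) (X v.1) :=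
  congrArg (Ideal.Quotient.mk _) (rename_X _ _)

lemma liftₐ_toChart_chartIncl (hf : 1 < f) (u : ChartRing k f) :
    Ideal.Quotient.liftₐ _ (toChart k f) (fun _ h => relationIdeal_le_ker_toChart hf h)
      (chartIncl k f u) = algebraMap _ _ u := by
  suffices h : (Ideal.Quotient.liftₐ _ (toChart k f) fun _ h =>
      relationIdeal_le_ker_toChart hf h).comp (chartIncl k f) = IsScalarTower.toAlgHom k _ _ from
    DFunLike.congr_fun h u
  refine algHom_ext fun v => ?_
  rw [AlgHom.comp_apply, chartIncl_X]
  exact toChart_X_of_isChartVar hf v.2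

lemma mk_X_mem_range_chartIncl {v : PosetVar f} (h : IsChartVar v) :
    Ideal.Quotient.mk (relationIdeal k f) (X v) ∈ (chartIncl k f).range :=
  ⟨X ⟨v, h⟩, chartIncl_X _⟩

lemma mk_xEntry_mem_range_chartIncl {i j : ℕ} (h : i ≤ 1 ∨ j ≤ 1) :
    Ideal.Quotient.mk (relationIdeal k f) (xEntry k f i j) ∈ (chartIncl k f).range := by
  unfold xEntry
  split_ifs
  · exact mk_X_mem_range_chartIncl (isChartVar_x.2 (by lia))
  · rw [map_neg]
    exact neg_mem (mk_X_mem_range_chartIncl (isChartVar_x.2 (by lia)))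
  · rw [map_zero]
    exact zero_mem _

lemma chartIncl_pivot (hf : 1 < f) :
    chartIncl k f (pivot k f) = Ideal.Quotient.mk (relationIdeal k f) (xEntry k f 0 1) := by
  rw [pivot_eq_X hf, xEntry_of_lt one_pos hf, chartIncl_X]

lemma mk_x_mul_mem_range_chartIncl {i j : ℕ} (hi : 2 ≤ i) (hij : i < j) (hj : j < f) :
    Ideal.Quotient.mk (relationIdeal k f) (xEntry k f 0 1 * X (x i j hij hj)) ∈
      (chartIncl k f).range := by
  have hPf := Ideal.Quotient.eq_zero_iff_mem.2
    (pfaffian_mem_relationIdeal (k := k) one_pos hi hij hj)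
  have hmul : Ideal.Quotient.mk (relationIdeal k f) (xEntry k f 0 1 * X (x i j hij hj)) =
      Ideal.Quotient.mk _ (xEntry k f 0 i) * Ideal.Quotient.mk _ (xEntry k f 1 j) -
        Ideal.Quotient.mk _ (xEntry k f 0 j) * Ideal.Quotient.mk _ (xEntry k f 1 i) := by
    rw [← xEntry_of_lt hij hj, map_mul]
    simp only [pfaffian, map_add, map_sub, map_mul] at hPf
    linear_combination hPf
  rw [hmul]
  exact sub_mem
    (mul_mem (mk_xEntry_mem_range_chartIncl (.inl zero_le_one))
      (mk_xEntry_mem_range_chartIncl (.inl le_rfl)))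
    (mul_mem (mk_xEntry_mem_range_chartIncl (.inl zero_le_one))
      (mk_xEntry_mem_range_chartIncl (.inl le_rfl)))

lemma mk_tEntry_mul_xEntry_mem_range_chartIncl {i j : ℕ} (hi : i < 2) (hj : j < 2) (hij : i ≠ j)
    (hf : 1 < f) : Ideal.Quotient.mk (relationIdeal k f) (tEntry k f i * xEntry k f i j) ∈
      (chartIncl k f).range := by
  have hsum := Ideal.Quotient.eq_zero_iff_mem.2
    (rowMulMatrix_mem_relationIdeal (k := k) (hj.trans_le hf))
  rw [rowMulMatrix, map_sum, ← Finset.add_sum_erase _ _ (Finset.mem_range.2 (hi.trans_le hf))]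
    at hsum
  rw [eq_neg_of_add_eq_zero_left hsum]
  refine neg_mem (sum_mem fun l hl => ?_)
  by_cases hlj : l = j
  · rw [hlj, xEntry_self, mul_zero, map_zero]
    exact zero_mem _
  · rw [map_mul, tEntry_of_lt (by grind)]
    exact mul_mem (mk_X_mem_range_chartIncl (isChartVar_t.2 (by grind)))
      (mk_xEntry_mem_range_chartIncl (.inr (by lia)))

lemma mk_xEntry_zero_one_mul_X_mem_range_chartIncl (hf : 1 < f) (v : PosetVar f) :
    Ideal.Quotient.mk (relationIdeal k f) (xEntry k f 0 1 * X v) ∈ (chartIncl k f).range := by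
  by_cases hv : IsChartVar v
  · rw [map_mul]
    exact mul_mem (mk_xEntry_mem_range_chartIncl (.inl zero_le_one)) (mk_X_mem_range_chartIncl hv)
  cases v using casesXT with
  | x i j hij hj => exact mk_x_mul_mem_range_chartIncl (by rw [isChartVar_x] at hv; lia) hij hj
  | t i hi =>
    obtain rfl | rfl : i = 0 ∨ i = 1 := by rw [isChartVar_t] at hv; lia
    · rw [← tEntry_of_lt hi, mul_comm]
      exact mk_tEntry_mul_xEntry_mem_range_chartIncl two_pos one_lt_two zero_ne_one hf
    · have h := mk_tEntry_mul_xEntry_mem_range_chartIncl (k := k) one_lt_two two_pos one_ne_zero hf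
      rw [xEntry_of_gt one_pos hf, mul_neg, map_neg, neg_mem_iff, mul_comm] at h
      rwa [xEntry_of_lt one_pos hf, ← tEntry_of_lt hi]

open Pointwise in
lemma exists_pow_mul_eq_chartIncl (hf : 1 < f)
    (a : MvPolynomial (PosetVar f) k ⧸ relationIdeal k f) :
    ∃ n u, chartIncl k f (pivot k f) ^ n * a = chartIncl k f u := by
  let mk := Ideal.Quotient.mkₐ k (relationIdeal k f)
  have ha : a ∈ Algebra.adjoin k (Set.range fun v => mk (X v)) := by
    rw [Set.range_comp', Algebra.adjoin_image, adjoin_range_X, Algebra.map_top]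
    exact Ideal.Quotient.mkₐ_surjective _ _ a
  have hpivot : chartIncl k f (pivot k f) • (Set.range fun v => mk (X v)) ⊆
      (chartIncl k f).range := by
    rintro _ ⟨_, ⟨v, rfl⟩, rfl⟩
    rw [chartIncl_pivot hf]
    exact mk_xEntry_zero_one_mul_X_mem_range_chartIncl hf v
  obtain ⟨n, hn⟩ := Algebra.pow_smul_mem_of_smul_subset_of_mem_adjoin
    (chartIncl k f (pivot k f)) _ (chartIncl k f).range hpivot ha ⟨_, rfl⟩
  obtain ⟨u, hu⟩ := hn n le_rfl
  exact ⟨n, u, hu.symm⟩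

lemma isPrime_relationIdeal [IsDomain k] (hf : 4 ≤ f) : (relationIdeal k f).IsPrime := by
  have h := (straighteningLaw k hf).isPrime_K (ranking hf).bot
  rwa [(ranking hf).K_bot] at h

lemma prime_mk_xEntry_zero_one [IsDomain k] (hf : 4 ≤ f) :
    Prime (Ideal.Quotient.mk (relationIdeal k f) (xEntry k f 0 1)) := by
  rw [xEntry_of_lt one_pos (by lia)]
  refine (straighteningLaw k hf).prime_mk_X (b := x 0 2 two_pos (by lia)) (Set.ext fun v => ?_)
  rw [Set.mem_compl_iff, Set.mem_Ici, Set.mem_singleton_iff]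
  cases v using casesXT <;> grind

lemma uniqueFactorizationMonoid_quotient_relationIdeal [IsDomain k] [IsNoetherianRing k]
    [UniqueFactorizationMonoid k] (hf : 4 ≤ f) :
    UniqueFactorizationMonoid (MvPolynomial (PosetVar f) k ⧸ relationIdeal k f) := by
  have hf1 : 1 < f := by lia
  have := isPrime_relationIdeal (k := k) hf
  have hp := prime_mk_xEntry_zero_one (k := k) hf
  rw [← chartIncl_pivot hf1] at hp
  let := (chartIncl k f).toRingHom.toAlgebra
  let := (Ideal.Quotient.liftₐ _ (toChart k f) fun _ h =>
    relationIdeal_le_ker_toChart hf1 h).toRingHom.toAlgebra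
  have : IsScalarTower (ChartRing k f) (MvPolynomial (PosetVar f) k ⧸ relationIdeal k f)
      (Localization.Away (pivot k f)) :=
    .of_algebraMap_eq fun u => (liftₐ_toChart_chartIncl hf1 u).symm
  have := isLocalizationAway_algebraMap (L := Localization.Away (pivot k f)) (pivot k f)
    (exists_pow_mul_eq_chartIncl hf1)
  have : UniqueFactorizationMonoid (Localization.Away (pivot k f)) :=
    UniqueFactorizationMonoid.of_isLocalization (Submonoid.powers (pivot k f)) _
  exact (UniqueFactorizationMonoid.iff_of_isLocalizationAway_of_prime hp _).2 this

end Chart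

/-! ### Base change -/

section BaseChange

open MvPolynomial TensorProduct

attribute [local instance] MvPolynomial.algebraMvPolynomial

/-- Base change of a `k`-algebra along `k → R` does not depend on whether it is presented as a
quotient of `k[σ]` or as an algebra over `k[ι]`. -/
def tensorQuotientEquiv {k σ ι : Type*} (R : Type*) [CommRing k] [CommRing R] [Algebra k R]
    (I : Ideal (MvPolynomial σ k)) [Algebra (MvPolynomial ι k) (MvPolynomial σ k ⧸ I)]
    [IsScalarTower k (MvPolynomial ι k) (MvPolynomial σ k ⧸ I)] :
    MvPolynomial ι R ⊗[MvPolynomial ι k] (MvPolynomial σ k ⧸ I) ≃+*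
      MvPolynomial σ R ⧸ I.map (MvPolynomial.map (algebraMap k R)) :=
  let C := MvPolynomial σ k ⧸ I
  ((Algebra.IsPushout.cancelBaseChangeAlg k R (MvPolynomial ι k) (MvPolynomial ι R) C).toRingEquiv
    |>.trans (Algebra.IsPushout.cancelBaseChangeAlg k R (MvPolynomial σ k) (MvPolynomial σ R)
      C).symm.toRingEquiv).trans
    (Algebra.TensorProduct.quotIdealMapEquivTensorQuot (MvPolynomial σ R) I).symm.toRingEquiv

lemma isGorensteinRing_quotient_map_of_isFrobeniusAlgebra {k σ : Type} {n : ℕ} {R : Type u}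
    [CommRing k] [CommRing R] [Algebra k R] (hR : IsGorensteinRing R)
    {I : Ideal (MvPolynomial σ k)} [Algebra (MvPolynomial (Fin n) k) (MvPolynomial σ k ⧸ I)]
    [IsScalarTower k (MvPolynomial (Fin n) k) (MvPolynomial σ k ⧸ I)]
    (h : IsFrobeniusAlgebra (MvPolynomial (Fin n) k) (MvPolynomial σ k ⧸ I)) :
    IsGorensteinRing (MvPolynomial σ R ⧸ I.map (MvPolynomial.map (algebraMap k R))) :=
  isGorensteinRing_of_ringEquiv (tensorQuotientEquiv R I)
    (isGorensteinRing_of_isFrobeniusAlgebra (isFrobeniusAlgebra_baseChange _ h)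
      (isGorensteinRing_mvPolynomial hR n))

namespace WonderfulRanking

variable {k σ ι : Type*} [CommRing k] [Fintype σ] [PartialOrder σ] [LinearOrder ι]
  (r : WonderfulRanking σ ι) (D : StraighteningLaw k σ)

lemma isScalarTower_quotient : letI := r.quotientAlgebra D
    IsScalarTower k (MvPolynomial ι k) (MvPolynomial σ k ⧸ D.J) :=
  letI := r.quotientAlgebra D
  .of_algebraMap_eq fun a => congrArg (Ideal.Quotient.mk D.J) (r.theta.commutes a).symm

lemma isFrobeniusAlgebra_quotient [Finite ι] [IsDomain k] [IsNoetherianRing k]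
    [UniqueFactorizationMonoid k] [UniqueFactorizationMonoid (MvPolynomial σ k ⧸ D.J)] :
    letI := r.quotientAlgebra D
    IsFrobeniusAlgebra (MvPolynomial ι k) (MvPolynomial σ k ⧸ D.J) := by
  let := r.quotientAlgebra D
  let : Module (MvPolynomial ι k) (MvPolynomial σ k ⧸ D.J) := Algebra.toModule
  have : D.J.IsPrime := r.K_bot D ▸ D.isPrime_K r.bot
  obtain ⟨κ, _, ⟨b⟩⟩ := r.exists_basis_quotient D
  have := Module.Finite.of_basis b
  have := Module.Free.of_basis b
  exact isFrobeniusAlgebra_of_uniqueFactorizationMonoid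

end WonderfulRanking

end BaseChange

section MapRelations

variable {R S : Type*} [CommRing R] [CommRing S] (φ : R →+* S) (f : ℕ)

lemma map_xvt (i j : Fin f) : MvPolynomial.map φ (xvt R f i j) = xvt S f i j := by
  simp only [xvt]
  split_ifs <;> simp

lemma map_pf4t (i j k l : Fin f) : MvPolynomial.map φ (pf4t R f i j k l) = pf4t S f i j k l := by
  simp [pf4t, map_xvt]

lemma map_tX (j : Fin f) : MvPolynomial.map φ (tX R f j) = tX S f j := by
  simp [tX, tvt, map_xvt]

lemma map_Jt : (Jt R f).map (MvPolynomial.map φ) = Jt S f := by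
  simp only [Jt, Pf4t, ItX, Submodule.add_eq_sup, Ideal.map_sup, Ideal.map_span]
  congr 2
  · ext p
    simp only [Set.mem_image, Set.mem_ofPred_eq]
    constructor
    · rintro ⟨_, ⟨i, j, k, l, hij, hjk, hkl, rfl⟩, rfl⟩
      exact ⟨i, j, k, l, hij, hjk, hkl, map_pf4t φ f i j k l⟩
    · rintro ⟨i, j, k, l, hij, hjk, hkl, rfl⟩
      exact ⟨_, ⟨i, j, k, l, hij, hjk, hkl, rfl⟩, map_pf4t φ f i j k l⟩
  · ext p
    simp only [Set.mem_image, Set.mem_ofPred_eq]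
    constructor
    · rintro ⟨_, ⟨j, rfl⟩, rfl⟩
      exact ⟨j, map_tX φ f j⟩
    · rintro ⟨j, rfl⟩
      exact ⟨_, ⟨j, rfl⟩, map_tX φ f j⟩

end MapRelations

/-- for an arbitrary commutative Noetherian ring `R₀` and
`f ≥ 4`, if `R₀` is Gorenstein then `𝓡/J` is a Gorenstein ring, where
`J = Pf₄(X) + I₁(tX)` in `𝓡 = R₀[x_{i,j}; t_i]`. -/
theorem stmt_13 (R₀ : Type u) [CommRing R₀] [IsNoetherianRing R₀] (f : ℕ) (hf : 4 ≤ f)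
    (hGor : IsGorensteinRing R₀) :
    IsGorensteinRing (MvPolynomial (Var f) R₀ ⧸ Jt R₀ f) := by
  let D := straighteningLaw ℤ hf
  let r := PosetVar.ranking hf
  let := r.quotientAlgebra D
  have := r.isScalarTower_quotient D
  have : UniqueFactorizationMonoid (MvPolynomial (PosetVar f) ℤ ⧸ D.J) :=
    uniqueFactorizationMonoid_quotient_relationIdeal hf
  have hJ : D.J.map (MvPolynomial.map (algebraMap ℤ R₀)) = Jt R₀ f := map_Jt (algebraMap ℤ R₀) f
  have h : IsGorensteinRing
      (MvPolynomial (PosetVar f) R₀ ⧸ D.J.map (MvPolynomial.map (algebraMap ℤ R₀))) :=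
    isGorensteinRing_quotient_map_of_isFrobeniusAlgebra hGor (r.isFrobeniusAlgebra_quotient D)
  rwa [hJ] at h

end AluffiStmt
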